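/- arXiv:2204.03519 — 4 statements merged into one kernel-verified Lean document; each statement's English description precedes it below -/
import Mathlib

section
/- There exist a constant K > 0 and a natural number k₀ such that for every integer k ≥ k₀ and every real σ with 9/5 ≤ σ ≤ 2, the series ∑_{m=1}^∞ τ_k(m²) / m^σ converges and satisfies ∑_{m=1}^∞ τ_k(m²) / m^σ ≤ K · k^{10 · k^{2/σ}}. -/
open Finset

/-- The `k`-fold divisor function `τ_k(n)`: the number of `k`-tuples
`(a_1, …, a_k)` of positive integers with `a_1 ⋯ a_k = n`. -/
def tauk (k n : ℕ) : ℕ :=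
  ((Fintype.piFinset fun _ : Fin k => Finset.Icc 1 n).filter fun f => ∏ i, f i = n).card

theorem mem_tauk {k n : ℕ} (hn : n ≠ 0) (f : Fin k → ℕ) :
    f ∈ ((Fintype.piFinset fun _ : Fin k => Finset.Icc 1 n).filter fun f => ∏ i, f i = n) ↔
      ∏ i, f i = n := by
  simp only [mem_filter, Fintype.mem_piFinset, mem_Icc, and_iff_right_iff_imp]
  rintro h i
  have hd : f i ∣ n := h ▸ dvd_prod_of_mem f (mem_univ i)
  exact ⟨Nat.pos_of_dvd_of_pos hd (Nat.pos_of_ne_zero hn), Nat.le_of_dvd (Nat.pos_of_ne_zero hn) hd⟩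

theorem tauk_succ {k n : ℕ} (hn : n ≠ 0) : tauk (k + 1) n = ∑ d ∈ n.divisors, tauk k d := by
  unfold tauk
  rw [← card_sigma]
  symm
  refine card_bij (fun x _ => (Fin.cons (n / x.1) x.2 : Fin (k+1) → ℕ)) ?_ ?_ ?_
  · rintro ⟨d, g⟩ h
    rw [mem_sigma] at h
    obtain ⟨h1, h2⟩ := h
    have hd : d ≠ 0 := (Nat.pos_of_mem_divisors h1).ne'
    rw [mem_tauk hd] at h2
    rw [mem_tauk hn, Fin.prod_univ_succ]
    simp only [Fin.cons_zero, Fin.cons_succ]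
    simp only at h2
    rw [h2]
    exact Nat.div_mul_cancel (Nat.dvd_of_mem_divisors h1)
  · rintro ⟨d, g⟩ h ⟨d', g'⟩ h' e
    rw [mem_sigma] at h h'
    have hd : d ≠ 0 := (Nat.pos_of_mem_divisors h.1).ne'
    have hd' : d' ≠ 0 := (Nat.pos_of_mem_divisors h'.1).ne'
    have e1 := (mem_tauk hd _).1 h.2
    have e2 := (mem_tauk hd' _).1 h'.2
    have e3 := (Fin.cons_inj.1 e).2
    simp only at e1 e2 e3
    subst e3
    rw [e1] at e2
    subst e2
    rfl
  · intro f hf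
    rw [mem_tauk hn, Fin.prod_univ_succ] at hf
    have hd : ∏ i : Fin k, f i.succ ≠ 0 := by
      intro h; rw [h] at hf; simp at hf; exact hn hf.symm
    refine ⟨⟨∏ i : Fin k, f i.succ, fun i => f i.succ⟩, ?_, ?_⟩
    · rw [mem_sigma]
      exact ⟨Nat.mem_divisors.2 ⟨⟨f 0, by rw [← hf]; ring⟩, hn⟩, (mem_tauk hd _).2 rfl⟩
    · have : n / (∏ i : Fin k, f i.succ) = f 0 := by
        rw [← hf]; exact Nat.mul_div_cancel _ (Nat.pos_of_ne_zero hd)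
      simp only [this]
      exact Fin.cons_self_tail f

theorem tauk_eq (k n : ℕ) (hn : n ≠ 0) : tauk k n = (ArithmeticFunction.zeta ^ k) n := by
  induction k generalizing n with
  | zero =>
    simp only [pow_zero, ArithmeticFunction.one_apply]
    unfold tauk
    split_ifs with h
    · subst h; simp
    · rw [card_eq_zero, eq_empty_iff_forall_notMem]
      intro f hf
      rw [mem_tauk hn] at hf
      simp at hf
      exact h hf.symm
  | succ k ih =>
    rw [tauk_succ hn, pow_succ, ArithmeticFunction.mul_zeta_apply]
    exact sum_congr rfl fun d hd => ih d (Nat.pos_of_mem_divisors hd).ne'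

theorem tauk_mul (k : ℕ) {m n : ℕ} (hk : 0 < k) (h : m.Coprime n) :
    tauk k (m * n) = tauk k m * tauk k n := by
  have h0 : tauk k 0 = 0 := by
    obtain ⟨j, rfl⟩ : ∃ j, k = j + 1 := ⟨k - 1, by omega⟩
    simp [tauk]
  rcases eq_or_ne m 0 with rfl | hm
  · simp [h0]
  rcases eq_or_ne n 0 with rfl | hn
  · simp [h0]
  rw [tauk_eq _ _ hm, tauk_eq _ _ hn, tauk_eq _ _ (mul_ne_zero hm hn)]
  exact (ArithmeticFunction.isMultiplicative_zeta.pow).map_mul_of_coprime h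

theorem tauk_one (k : ℕ) : tauk k 1 = 1 := by
  rw [tauk_eq _ _ one_ne_zero]
  exact (ArithmeticFunction.isMultiplicative_zeta.pow).map_one

theorem tauk_prime_pow (k n : ℕ) {p : ℕ} (hp : p.Prime) :
    tauk (k + 1) (p ^ n) = (n + k).choose k := by
  induction k generalizing n with
  | zero =>
    rw [tauk_eq _ _ (pow_ne_zero _ hp.ne_zero)]
    simp [ArithmeticFunction.zeta_apply, hp.ne_zero]
  | succ k ih =>
    rw [tauk_succ (pow_ne_zero _ hp.ne_zero), Nat.sum_divisors_prime_pow hp]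
    simp only [ih]
    rw [Nat.sum_range_add_choose]
    ring_nf

theorem tauk_prime_pow_le (k n : ℕ) {p : ℕ} (hp : p.Prime) : tauk k (p ^ n) ≤ k ^ n := by
  induction k generalizing n with
  | zero =>
    rw [tauk_eq _ _ (pow_ne_zero _ hp.ne_zero)]
    rcases n with _ | n
    · simp
    · simp [hp.ne_one]
  | succ k ih =>
    rw [tauk_succ (pow_ne_zero _ hp.ne_zero), Nat.sum_divisors_prime_pow hp, add_pow]
    refine sum_le_sum fun i hi => ?_
    rw [one_pow, mul_one]
    exact (ih i).trans (Nat.le_mul_of_pos_right _ (Nat.choose_pos (by simp at hi; omega)))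

theorem local_sum (k : ℕ) (hk : 0 < k) {p : ℕ} (hp : p.Prime) {x : ℝ} (hx0 : 0 ≤ x)
    (hx : x ≤ 2 / 3) :
    Summable (fun n : ℕ => (tauk k (p ^ (2 * n)) : ℝ) * x ^ (2 * n)) ∧
      ∑' n : ℕ, (tauk k (p ^ (2 * n)) : ℝ) * x ^ (2 * n) ≤ Real.exp (3 * (k * x)) := by
  obtain ⟨j, rfl⟩ : ∃ j, k = j + 1 := ⟨k - 1, by omega⟩
  have h := hasSum_choose_mul_geometric_of_norm_lt_one (𝕜 := ℝ) j (r := x)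
    (by rw [Real.norm_of_nonneg hx0]; linarith)
  have hinj : Function.Injective (fun n : ℕ => 2 * n) := fun a b h => by simpa using h
  have hs := h.summable.comp_injective hinj
  simp only [tauk_prime_pow _ _ hp]
  refine ⟨hs, ?_⟩
  have h1 : ∑' n : ℕ, ((2 * n + j).choose j : ℝ) * x ^ (2 * n) ≤ 1 / (1 - x) ^ (j + 1) := by
    rw [← h.tsum_eq]
    exact tsum_comp_le_tsum_of_inj h.summable (fun n => by positivity) hinj
  refine h1.trans ?_
  have h2 : 1 / (1 - x) ≤ Real.exp (3 * x) := by
    have := Real.add_one_le_exp (3 * x)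
    refine le_trans ?_ this
    rw [div_le_iff₀ (by linarith)]
    nlinarith
  have h3 : 0 ≤ 1 / (1 - x) := by
    apply div_nonneg <;> linarith
  calc 1 / (1 - x) ^ (j + 1) = (1 / (1 - x)) ^ (j + 1) := by rw [div_pow, one_pow]
    _ ≤ (Real.exp (3 * x)) ^ (j + 1) := by gcongr
    _ = _ := by rw [← Real.exp_nat_mul]; congr 1; push_cast; ring

theorem local_sum' (k : ℕ) {p : ℕ} (hp : p.Prime) {x : ℝ} (hx0 : 0 ≤ x)
    (hs : Summable (fun n : ℕ => (tauk k (p ^ (2 * n)) : ℝ) * x ^ (2 * n)))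
    (hx : k * x ≤ 1 / 2) :
    ∑' n : ℕ, (tauk k (p ^ (2 * n)) : ℝ) * x ^ (2 * n) ≤ Real.exp (4 / 3 * (k * x) ^ 2) := by
  have hu0 : 0 ≤ (k * x) ^ 2 := by positivity
  have hkx : 0 ≤ k * x := by positivity
  have hu : (k * x) ^ 2 ≤ 1 / 4 := by nlinarith
  have hg := hasSum_geometric_of_lt_one hu0 (by linarith)
  have h1 : ∑' n : ℕ, (tauk k (p ^ (2 * n)) : ℝ) * x ^ (2 * n) ≤ (1 - (k * x) ^ 2)⁻¹ := by
    rw [← hg.tsum_eq]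
    refine hs.tsum_le_tsum (fun n => ?_) hg.summable
    rw [← pow_mul, mul_pow]
    gcongr
    exact_mod_cast tauk_prime_pow_le k (2 * n) hp
  refine h1.trans (le_trans ?_ (Real.add_one_le_exp _))
  rw [inv_le_iff_one_le_mul₀ (by linarith)]
  nlinarith

noncomputable def wt (y s : ℝ) (n : ℕ) : ℝ :=
  if (n : ℝ) ≤ y then 3 / 2 * (y / n) ^ s else 1 / 3 * ((y / n) ^ s) ^ 2

theorem wt_nonneg {y s : ℝ} (hy : 1 ≤ y) (n : ℕ) : 0 ≤ wt y s n := by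
  unfold wt
  split_ifs <;> positivity

theorem tele (M N : ℕ) (hM : 1 ≤ M) (h : M ≤ N) :
    ∑ n ∈ Ioc M N, 1 / ((n : ℝ) * √n) ≤ 2 / √M - 2 / √N := by
  induction N, h using Nat.le_induction with
  | base => simp
  | succ N h ih =>
    rw [← insert_Ioc_right_eq_Ioc_add_one h, sum_insert (by simp)]
    have hN : (1 : ℝ) ≤ N := by exact_mod_cast hM.trans h
    have key : 1 / (((N + 1 : ℕ) : ℝ) * √((N + 1 : ℕ) : ℝ)) ≤ 2 / √N - 2 / √((N + 1 : ℕ) : ℝ) := by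
      push_cast
      set a := √(N : ℝ) with ha
      set b := √((N : ℝ) + 1) with hb
      have ha0 : 0 < a := Real.sqrt_pos.2 (by linarith)
      have hb0 : 0 < b := Real.sqrt_pos.2 (by linarith)
      have ha2 : a ^ 2 = N := Real.sq_sqrt (by linarith)
      have hb2 : b ^ 2 = N + 1 := Real.sq_sqrt (by linarith)
      have hab : a ≤ b := Real.sqrt_le_sqrt (by linarith)
      rw [← hb2, div_sub_div _ _ ha0.ne' hb0.ne', div_le_div_iff₀ (by positivity) (by positivity)]
      have e : (b - a) * (b + a) = 1 := by nlinarith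
      have e1 : 1 ≤ (b - a) * (2 * b) := by nlinarith
      have : a * b ≤ b ^ 2 * ((b - a) * (2 * b)) := by nlinarith [mul_pos ha0 hb0, sq_nonneg b]
      nlinarith
    linarith

theorem sum_wt {y s : ℝ} (hy : 1 ≤ y) (hs : 9 / 10 ≤ s) (hs1 : s ≤ 1) (N : ℕ) :
    ∑ n ∈ Icc 1 N, wt y s n ≤ 3 / 2 * y * (1 + Real.log y) + y := by
  unfold wt
  rw [sum_ite]
  have hM : 1 ≤ ⌊y⌋₊ := Nat.le_floor (by simpa using hy)
  have hy0 : 0 < y := by linarith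
  apply add_le_add
  · calc ∑ n ∈ (Icc 1 N).filter (fun n : ℕ => (n : ℝ) ≤ y), 3 / 2 * (y / n) ^ s
        ≤ ∑ n ∈ (Icc 1 N).filter (fun n : ℕ => (n : ℝ) ≤ y), 3 / 2 * y * (n : ℝ)⁻¹ := by
          refine sum_le_sum fun n hn => ?_
          simp only [mem_filter, mem_Icc] at hn
          have h1 : (0 : ℝ) < n := by exact_mod_cast hn.1.1
          have : (y / n) ^ s ≤ (y / n) ^ (1 : ℝ) :=
            Real.rpow_le_rpow_of_exponent_le ((one_le_div h1).2 hn.2) hs1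
          rw [Real.rpow_one] at this
          rw [mul_assoc, ← div_eq_mul_inv]
          gcongr
      _ ≤ ∑ n ∈ Icc 1 ⌊y⌋₊, 3 / 2 * y * (n : ℝ)⁻¹ := by
          refine sum_le_sum_of_subset_of_nonneg ?_ (fun _ _ _ => by positivity)
          intro n hn
          simp only [mem_filter, mem_Icc] at hn ⊢
          exact ⟨hn.1.1, Nat.le_floor hn.2⟩
      _ ≤ _ := by
          rw [← mul_sum]
          gcongr
          have := harmonic_floor_le_one_add_log y hy
          rw [harmonic_eq_sum_Icc] at this
          push_cast at this
          exact this
  · calc ∑ n ∈ (Icc 1 N).filter (fun n : ℕ => ¬ (n : ℝ) ≤ y), 1 / 3 * ((y / n) ^ s) ^ 2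
        ≤ ∑ n ∈ (Icc 1 N).filter (fun n : ℕ => ¬ (n : ℝ) ≤ y), 1 / 3 * (y * √y) * (1 / ((n : ℝ) * √n)) := by
          refine sum_le_sum fun n hn => ?_
          simp only [mem_filter, mem_Icc, not_le] at hn
          have h1 : (0 : ℝ) < n := by exact_mod_cast hn.1.1
          have h2 : ((y / n) ^ s) ^ 2 ≤ (y / n) * √(y / n) := by
            have h0 : 0 < y / n := by positivity
            rw [Real.sqrt_eq_rpow, ← Real.rpow_natCast, ← Real.rpow_mul h0.le,
              ← Real.rpow_one_add' h0.le (by norm_num)]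
            apply Real.rpow_le_rpow_of_exponent_ge h0 ((div_le_one h1).2 hn.2.le)
            push_cast
            linarith
          have h3 : (y / n) * √(y / n) = (y * √y) * (1 / ((n : ℝ) * √n)) := by
            rw [Real.sqrt_div hy0.le]
            field_simp
          rw [mul_assoc, ← h3]
          gcongr
      _ ≤ ∑ n ∈ Ioc ⌊y⌋₊ (max N ⌊y⌋₊), 1 / 3 * (y * √y) * (1 / ((n : ℝ) * √n)) := by
          refine sum_le_sum_of_subset_of_nonneg ?_ (fun _ _ _ => by positivity)
          intro n hn
          simp only [mem_filter, mem_Icc, mem_Ioc, not_le] at hn ⊢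
          exact ⟨(Nat.floor_lt hy0.le).2 hn.2, hn.1.2.trans (le_max_left _ _)⟩
      _ ≤ 1 / 3 * (y * √y) * (2 / √(⌊y⌋₊ : ℝ)) := by
          rw [← mul_sum]
          gcongr
          have := tele ⌊y⌋₊ (max N ⌊y⌋₊) hM (le_max_right _ _)
          have h2 : 0 ≤ 2 / √((max N ⌊y⌋₊ : ℕ) : ℝ) := by positivity
          linarith
      _ ≤ y := by
          have hM' : (1 : ℝ) ≤ ⌊y⌋₊ := by exact_mod_cast hM
          have h1 : y ≤ (3 / 2) ^ 2 * ⌊y⌋₊ := by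
            have := Nat.lt_floor_add_one y
            linarith
          have h2 : √y ≤ 3 / 2 * √(⌊y⌋₊ : ℝ) := by
            apply Real.sqrt_le_iff.2
            refine ⟨by positivity, ?_⟩
            rw [mul_pow, Real.sq_sqrt (by positivity)]
            exact h1
          have h3 : 0 < √(⌊y⌋₊ : ℝ) := Real.sqrt_pos.2 (by linarith)
          rw [mul_div_assoc', div_le_iff₀ h3]
          nlinarith

theorem two_rpow {s : ℝ} (hs : 9 / 10 ≤ s) {p : ℕ} (hp : 2 ≤ p) : (p : ℝ) ^ (-s) ≤ 2 / 3 := by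
  have hp' : (2 : ℝ) ≤ p := by exact_mod_cast hp
  have h1 : (3 / 2 : ℝ) ≤ (2 : ℝ) ^ (9 / 10 : ℝ) := by
    have h : ((2 : ℝ) ^ (9 / 10 : ℝ)) ^ 10 = 512 := by
      rw [← Real.rpow_natCast, ← Real.rpow_mul (by norm_num)]
      norm_num
    by_contra! hc
    have := pow_lt_pow_left₀ hc (by positivity) (n := 10) (by norm_num)
    rw [h] at this
    norm_num at this
  have h2 : (3 / 2 : ℝ) ≤ (p : ℝ) ^ s :=
    calc (3 / 2 : ℝ) ≤ (2 : ℝ) ^ (9 / 10 : ℝ) := h1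
      _ ≤ (2 : ℝ) ^ s := Real.rpow_le_rpow_of_exponent_le (by norm_num) hs
      _ ≤ (p : ℝ) ^ s := Real.rpow_le_rpow (by norm_num) hp' (by linarith)
  rw [Real.rpow_neg (by positivity)]
  rw [inv_le_iff_one_le_mul₀ (by linarith)]
  linarith

theorem partial_bound (k : ℕ) (hk : 0 < k) {s y : ℝ} (hs : 9 / 10 ≤ s) (hs1 : s ≤ 1)
    (hy : 1 ≤ y) (hyk : y ^ s = 2 * k) (N : ℕ) :
    ∑ m ∈ range N, (tauk k ((m + 1) ^ 2) : ℝ) / ((m : ℝ) + 1) ^ (2 * s) ≤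
      Real.exp (3 / 2 * y * (1 + Real.log y) + y) := by
  set f : ℕ → ℝ := fun m => (tauk k (m ^ 2) : ℝ) / (m : ℝ) ^ (2 * s) with hf
  have hf0 : ∀ m, 0 ≤ f m := fun m => by positivity
  have hf1 : f 1 = 1 := by simp [hf, tauk_one]
  have hmul : ∀ {m n : ℕ}, m.Coprime n → f (m * n) = f m * f n := by
    intro m n h
    simp only [hf, mul_pow]
    rw [tauk_mul k hk (h.pow 2 2)]
    push_cast
    rw [Real.mul_rpow (by positivity) (by positivity)]
    field_simp
  have hpp : ∀ {p : ℕ}, p.Prime → ∀ n : ℕ,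
      f (p ^ n) = (tauk k (p ^ (2 * n)) : ℝ) * ((p : ℝ) ^ (-s)) ^ (2 * n) := by
    intro p hp n
    have hp0 : (0 : ℝ) ≤ p := by positivity
    simp only [hf]
    rw [← pow_mul, mul_comm n 2, div_eq_mul_inv]
    congr 1
    push_cast
    rw [Real.rpow_neg hp0, inv_pow]
    congr 1
    rw [← Real.rpow_natCast, ← Real.rpow_natCast, ← Real.rpow_mul hp0, ← Real.rpow_mul hp0]
    congr 1
    push_cast
    ring
  have hloc : ∀ {p : ℕ}, p.Prime → Summable (fun n : ℕ => f (p ^ n)) ∧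
      ∑' n : ℕ, f (p ^ n) ≤ Real.exp (wt y s p) := by
    intro p hp
    have hx0 : 0 ≤ (p : ℝ) ^ (-s) := by positivity
    have hx := two_rpow hs hp.two_le
    have hp0 : (0 : ℝ) < p := by exact_mod_cast hp.pos
    simp only [hpp hp]
    obtain ⟨h1, h2⟩ := local_sum k hk hp hx0 hx
    have hkx : k * (p : ℝ) ^ (-s) = 1 / 2 * (y / p) ^ s := by
      rw [Real.div_rpow (by linarith) hp0.le, hyk, Real.rpow_neg hp0.le]
      field_simp
    refine ⟨h1, ?_⟩
    unfold wt
    split_ifs with hc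
    · refine h2.trans_eq ?_
      rw [hkx]
      congr 1
      ring
    · have hle : (y / p) ^ s ≤ 1 :=
        Real.rpow_le_one (by positivity) ((div_le_one hp0).2 (not_le.1 hc).le) (by linarith)
      refine (local_sum' k hp hx0 h1 (by rw [hkx]; linarith)).trans_eq ?_
      rw [hkx]
      congr 1
      ring
  obtain ⟨-, hsum⟩ := EulerProduct.summable_and_hasSum_smoothNumbers_prod_primesBelow_tsum hf1 hmul
    (fun {p} hp => by simpa only [Real.norm_of_nonneg (hf0 _)] using (hloc hp).1) (N + 1)
  have hA : ∑ m ∈ range N, (tauk k ((m + 1) ^ 2) : ℝ) / ((m : ℝ) + 1) ^ (2 * s) ≤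
      ∏ p ∈ (N + 1).primesBelow, ∑' n : ℕ, f (p ^ n) := by
    rw [← hsum.tsum_eq, ← Finset.sum_attach]
    let e : {m // m ∈ range N} → (N + 1).smoothNumbers := fun m =>
      ⟨m.1 + 1, Nat.mem_smoothNumbers_of_lt (Nat.succ_pos _) (by have := mem_range.1 m.2; omega)⟩
    have he : Function.Injective e := by
      intro a b h
      have : a.1 + 1 = b.1 + 1 := congrArg Subtype.val h
      exact Subtype.ext (by omega)
    have := hsum.summable.sum_le_tsum ((range N).attach.map ⟨e, he⟩) (fun _ _ => hf0 _)
    rw [sum_map] at this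
    refine le_trans (le_of_eq (sum_congr rfl fun m _ => ?_)) this
    simp [hf, e]
  refine hA.trans ?_
  calc ∏ p ∈ (N + 1).primesBelow, ∑' n : ℕ, f (p ^ n)
      ≤ ∏ p ∈ (N + 1).primesBelow, Real.exp (wt y s p) :=
        prod_le_prod (fun p _ => tsum_nonneg fun n => hf0 _)
          (fun p hp => (hloc (Nat.prime_of_mem_primesBelow hp)).2)
    _ = Real.exp (∑ p ∈ (N + 1).primesBelow, wt y s p) := (Real.exp_sum _ _).symm
    _ ≤ _ := by
      apply Real.exp_le_exp.2
      refine le_trans ?_ (sum_wt hy hs hs1 N)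
      refine sum_le_sum_of_subset_of_nonneg ?_ (fun _ _ _ => wt_nonneg hy _)
      intro p hp
      have h1 := Nat.lt_of_mem_primesBelow hp
      have h2 := (Nat.prime_of_mem_primesBelow hp).pos
      rw [mem_Icc]
      omega

theorem final_bound (k : ℕ) (hk : 200 ≤ k) {σ : ℝ} (h1 : 9 / 5 ≤ σ) (h2 : σ ≤ 2) :
    3 / 2 * ((2 * k : ℝ) ^ (2 / σ)) * (1 + Real.log ((2 * k : ℝ) ^ (2 / σ))) +
      (2 * k : ℝ) ^ (2 / σ) ≤ Real.log k * (10 * (k : ℝ) ^ (2 / σ)) := by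
  have hk' : (200 : ℝ) ≤ k := by exact_mod_cast hk
  have ht : 2 / σ ≤ 10 / 9 := by
    rw [div_le_iff₀ (by linarith)]; linarith
  have ht0 : 0 ≤ 2 / σ := by positivity
  set t := 2 / σ
  have hl : 5 ≤ Real.log k := by
    rw [Real.le_log_iff_exp_le (by linarith)]
    have := Real.exp_one_lt_d9
    have e : Real.exp 5 = Real.exp 1 ^ 5 := by rw [← Real.exp_nat_mul]; norm_num
    rw [e]
    calc Real.exp 1 ^ 5 ≤ (2.7182818286 : ℝ) ^ 5 := by gcongr
      _ ≤ 200 := by norm_num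
      _ ≤ k := hk'
  rw [Real.log_rpow (by linarith), Real.log_mul (by norm_num) (by linarith),
    Real.mul_rpow (by norm_num) (by linarith)]
  have h4 : (2 : ℝ) ^ t ≤ 4 := by
    calc (2 : ℝ) ^ t ≤ (2 : ℝ) ^ (2 : ℝ) :=
          Real.rpow_le_rpow_of_exponent_le (by norm_num) (by linarith)
      _ = 4 := by norm_num
  have hlog2 := Real.log_two_lt_d9
  have hlog2' := Real.log_two_gt_d9
  have hz : 0 ≤ (k : ℝ) ^ t := by positivity
  have h5 : t * (Real.log 2 + Real.log k) ≤ 10 / 9 * (0.7 + Real.log k) := by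
    apply mul_le_mul ht <;> linarith
  calc 3 / 2 * ((2 : ℝ) ^ t * (k : ℝ) ^ t) * (1 + t * (Real.log 2 + Real.log k)) +
        (2 : ℝ) ^ t * (k : ℝ) ^ t
      ≤ 3 / 2 * (4 * (k : ℝ) ^ t) * (1 + 10 / 9 * (0.7 + Real.log k)) + 4 * (k : ℝ) ^ t := by
        gcongr
    _ = (k : ℝ) ^ t * (6 * (1 + 10 / 9 * (0.7 + Real.log k)) + 4) := by ring
    _ ≤ (k : ℝ) ^ t * (10 * Real.log k) := by gcongr; linarith
    _ = _ := by ring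

theorem tsum_tauk_sq_div_rpow_le :
    ∃ K : ℝ, 0 < K ∧ ∃ k₀ : ℕ, ∀ k : ℕ, k₀ ≤ k → ∀ σ : ℝ, 9 / 5 ≤ σ → σ ≤ 2 →
      Summable (fun m : ℕ => (tauk k ((m + 1) ^ 2) : ℝ) / ((m : ℝ) + 1) ^ σ) ∧
      ∑' m : ℕ, (tauk k ((m + 1) ^ 2) : ℝ) / ((m : ℝ) + 1) ^ σ ≤
        K * (k : ℝ) ^ (10 * (k : ℝ) ^ (2 / σ)) := by
  refine ⟨1, one_pos, 200, fun k hk σ h1 h2 => ?_⟩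
  have hk' : (200 : ℝ) ≤ k := by exact_mod_cast hk
  have hb : ∀ N, ∑ m ∈ range N, (tauk k ((m + 1) ^ 2) : ℝ) / ((m : ℝ) + 1) ^ σ ≤
      1 * (k : ℝ) ^ (10 * (k : ℝ) ^ (2 / σ)) := by
    intro N
    have hσ : σ = 2 * (σ / 2) := by ring
    have hy : 1 ≤ (2 * k : ℝ) ^ (2 / σ) := Real.one_le_rpow (by linarith) (by positivity)
    have := partial_bound k (by omega) (s := σ / 2) (y := (2 * k : ℝ) ^ (2 / σ)) (by linarith)
      (by linarith) hy (by
        rw [← Real.rpow_mul (by linarith), div_mul_div_cancel₀ (by linarith)]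
        norm_num) N
    rw [← hσ] at this
    refine this.trans ?_
    rw [one_mul, Real.rpow_def_of_pos (x := (k : ℝ)) (by linarith) (10 * (k : ℝ) ^ (2 / σ))]
    exact Real.exp_le_exp.2 (final_bound k hk h1 h2)
  have h0 : ∀ m : ℕ, 0 ≤ (tauk k ((m + 1) ^ 2) : ℝ) / ((m : ℝ) + 1) ^ σ := fun m => by positivity
  exact ⟨summable_of_sum_range_le h0 hb, Real.tsum_le_of_sum_range_le h0 hb⟩
end

section
/- There exist absolute constants c > 0 and K > 0 such that the following holds: for every real σ ∈ [1/2, 1], every real X ≥ 10, every real Y with X^σ ≤ Y ≤ X, and every natural number ν with ⌊σν⌋ ≥ 1, the number of squarefree integers n ∈ [X, X+Y] with exactly ν distinct prime factors is at most K · Y · (log log X + c)^{ν_σ} / (ν_σ − 1)!, where ν_σ = ⌊σν⌋. -/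
open scoped Classical


lemma hr_pow_aux (F a : ℝ) (hF : 0 ≤ F) (ha : 0 ≤ a) (k : ℕ) :
    F ^ (k+1) + (k+1) * (a * F ^ k) ≤ (a + F) ^ (k+1) := by
  induction k with
  | zero => simp; linarith
  | succ k ih =>
    have h0 : 0 ≤ F ^ k := by positivity
    calc F ^ (k+1+1) + ((k+1 : ℕ)+1) * (a * F ^ (k+1)) 
        ≤ (a + F) * (F ^ (k+1) + (k+1) * (a * F ^ k)) := by
          push_cast
          have : 0 ≤ (k+1) * (a * a * F ^ k) := by positivity
          ring_nf at this ⊢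
          linarith
      _ ≤ (a + F) * (a + F) ^ (k+1) := by gcongr
      _ = _ := by ring

lemma hr_esymm {f : ℕ → ℝ} (hf : ∀ n, 0 ≤ f n) (P : Finset ℕ) : ∀ k : ℕ,
    ∑ T ∈ P.powersetCard k, ∏ p ∈ T, f p ≤ (∑ p ∈ P, f p) ^ k / (k.factorial : ℝ) := by
  induction P using Finset.induction_on with
  | empty =>
    intro k
    cases k with
    | zero => simp
    | succ k => 
      rw [Finset.powersetCard_eq_empty.2 (by simp)]; simp
  | insert a s ha ih =>
    intro k
    cases k with
    | zero => simp
    | succ k =>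
      rw [Finset.powersetCard_succ_insert ha, Finset.sum_union, Finset.sum_image, Finset.sum_insert ha]
      · have h1 : ∑ T ∈ s.powersetCard k, ∏ p ∈ insert a T, f p = f a * ∑ T ∈ s.powersetCard k, ∏ p ∈ T, f p := by
          rw [Finset.mul_sum]
          refine Finset.sum_congr rfl fun T hT => ?_
          rw [Finset.prod_insert]
          exact fun h => ha ((Finset.mem_powersetCard.1 hT).1 h)
        rw [h1]
        have hF : 0 ≤ ∑ p ∈ s, f p := Finset.sum_nonneg fun i _ => hf i
        have h2 := mul_le_mul_of_nonneg_left (ih k) (hf a)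
        have h3 := ih (k+1)
        have h4 := hr_pow_aux _ _ hF (hf a) k
        refine (add_le_add h3 h2).trans ?_
        rw [Nat.factorial_succ]
        have : (0:ℝ) < (k.factorial : ℝ) := by positivity
        push_cast
        rw [le_div_iff₀ (by positivity)]
        refine le_trans (le_of_eq ?_) h4
        field_simp
      · intro T hT U hU h
        have h1 : a ∉ T := fun h => ha ((Finset.mem_powersetCard.1 hT).1 h)
        have h2 : a ∉ U := fun h => ha ((Finset.mem_powersetCard.1 hU).1 h)
        rw [← Finset.erase_insert h1, ← Finset.erase_insert h2]
        exact congrArg (fun W => Finset.erase W a) h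
      · rw [Finset.disjoint_left]
        intro T hT hT2
        obtain ⟨U, hU, rfl⟩ := Finset.mem_image.1 hT2
        exact ha ((Finset.mem_powersetCard.1 hT).1 (Finset.mem_insert_self _ _))

lemma hr_small (k : ℕ) (hk : 1 ≤ k) : ∀ (ν : ℕ) (S : Finset ℕ), S.card = ν → k ≤ ν → (∀ p ∈ S, 1 ≤ p) →
    ∃ T ⊆ S, T.card = k ∧ (∏ p ∈ T, p) ^ ν ≤ (∏ p ∈ S, p) ^ k := by
  intro ν
  induction ν with
  | zero => intro S hS h; omega
  | succ m ih =>
    intro S hS hkm h1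
    rcases Nat.lt_or_ge m k with h | h
    · have : k = m + 1 := by omega
      exact ⟨S, subset_rfl, by omega, by rw [this]⟩
    · have hne : S.Nonempty := by rw [← Finset.card_pos]; omega
      set M := S.max' hne
      have hM : M ∈ S := S.max'_mem hne
      have hc : (S.erase M).card = m := by rw [Finset.card_erase_of_mem hM]; omega
      obtain ⟨T, hT, hTc, hTp⟩ := ih (S.erase M) hc h (fun p hp => h1 p (Finset.mem_of_mem_erase hp))
      refine ⟨T, hT.trans (Finset.erase_subset _ _), hTc, ?_⟩
      have hS' : ∏ p ∈ S, p = (∏ p ∈ S.erase M, p) * M := (Finset.prod_erase_mul S _ hM).symm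
      set A := ∏ p ∈ S.erase M, p
      have hA : A ≤ M ^ m := by
        rw [← hc]
        exact Finset.prod_le_pow_card _ _ _ (fun p hp => S.le_max' p (Finset.mem_of_mem_erase hp))
      rw [hS']
      have : m ≠ 0 := by omega
      rw [← Nat.pow_le_pow_iff_left this]
      calc ((∏ p ∈ T, p) ^ (m+1)) ^ m = ((∏ p ∈ T, p) ^ m) ^ (m+1) := by ring
        _ ≤ (A ^ k) ^ (m+1) := by gcongr
        _ = (A ^ m * A) ^ k := by ring
        _ ≤ (A ^ m * M ^ m) ^ k := by gcongr
        _ = _ := by ring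

lemma hr_mult (X Y : ℝ) (hX : 0 ≤ X) (hY : 0 ≤ Y) (d : ℕ) (hd : 0 < d) :
    (((Finset.Icc ⌈X⌉₊ ⌊X + Y⌋₊).filter fun n => d ∣ n).card : ℝ) ≤ Y / d + 1 := by
  have hd' : (0:ℝ) < d := by exact_mod_cast hd
  have h : ((Finset.Icc ⌈X⌉₊ ⌊X + Y⌋₊).filter fun n => d ∣ n).card ≤ (Finset.Icc ⌈X/d⌉₊ ⌊(X + Y)/d⌋₊).card := by
    refine Finset.card_le_card_of_injOn (fun n => n / d) ?_ ?_
    · intro n hn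
      simp only [Finset.coe_filter, Finset.mem_Icc, Set.mem_ofPred_eq] at hn
      obtain ⟨⟨h1, h2⟩, m, rfl⟩ := hn
      rw [Nat.ceil_le] at h1
      rw [Nat.le_floor_iff (by positivity)] at h2
      push_cast at h1 h2
      simp only [Finset.coe_Icc, Set.mem_Icc, Nat.mul_div_cancel_left _ hd]
      rw [Nat.ceil_le, Nat.le_floor_iff (by positivity), div_le_iff₀ hd', le_div_iff₀ hd']
      constructor <;> linarith
    · intro a ha b hb hab
      simp only [Finset.coe_filter, Set.mem_ofPred_eq] at ha hb
      exact Nat.eq_of_mul_eq_mul_left hd (by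
        rw [← Nat.div_mul_cancel ha.2, ← Nat.div_mul_cancel hb.2]; simp only at hab; rw [hab])
  refine (Nat.cast_le.2 h).trans ?_
  rw [Nat.card_Icc]
  rcases le_total ⌈X/d⌉₊ (⌊(X + Y)/d⌋₊ + 1) with h | h
  · rw [Nat.cast_sub h]
    have := Nat.le_ceil (X/d)
    have := Nat.floor_le (show 0 ≤ (X+Y)/d by positivity)
    rw [add_div] at this
    push_cast
    rw [add_div]
    linarith
  · rw [Nat.sub_eq_zero_of_le h]; simp; positivity

lemma hr_mertens1 (N : ℕ) (hN : 2 ≤ N) :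
    ∑ p ∈ N.primesLE, Real.log p / p ≤ Real.log N + Real.log 4 := by
  have hN' : (0:ℝ) < N := by positivity
  have h1 : Real.log (N.factorial) ≤ N * Real.log N := by
    rw [← Real.log_pow]
    apply Real.log_le_log (by positivity)
    exact_mod_cast Nat.factorial_le_pow N
  have h2 : ∑ p ∈ N.primesLE, ((N:ℝ)/p - 1) * Real.log p ≤ Real.log N.factorial := by
    rw [Real.log_nat_eq_sum_factorization, Finsupp.sum, Nat.support_factorization]
    have : N.factorial.primeFactors = N.primesLE := by
      ext p
      rw [Nat.mem_primeFactors, Nat.mem_primesLE]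
      constructor
      · rintro ⟨a, b, c⟩; exact ⟨(a.dvd_factorial).1 b, a⟩
      · rintro ⟨a, b⟩; exact ⟨b, b.dvd_factorial.2 a, Nat.factorial_ne_zero _⟩
    rw [this]
    refine Finset.sum_le_sum fun p hp => ?_
    obtain ⟨hp1, hp2⟩ := Nat.mem_primesLE.1 hp
    refine mul_le_mul_of_nonneg_right ?_ (Real.log_natCast_nonneg p)
    haveI := Fact.mk hp2
    have h3 : N / p ≤ N.factorial.factorization p := by
      rw [Nat.factorization_def _ hp2, ← padicValNat_mul_div_factorial, padicValNat_factorial_mul]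
      omega
    have h4 : (N:ℝ)/p < (N/p : ℕ) + 1 := by
      have hp0 : (0:ℝ) < p := by exact_mod_cast hp2.pos
      rw [div_lt_iff₀ hp0]
      have := Nat.lt_mul_div_succ N hp2.pos
      have h5 : (N:ℝ) < p * ((N/p : ℕ) + 1) := by exact_mod_cast this
      linarith
    have h5 : ((N/p : ℕ):ℝ) ≤ N.factorial.factorization p := by exact_mod_cast h3
    linarith
  have h3 := Chebyshev.theta_le_log4_mul_x hN'.le
  rw [Chebyshev.theta_eq_sum_primesLE_log] at h3
  have h4 : ∑ p ∈ N.primesLE, ((N:ℝ)/p - 1) * Real.log p = N * (∑ p ∈ N.primesLE, Real.log p / p) - ∑ p ∈ N.primesLE, Real.log p := by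
    rw [Finset.mul_sum, ← Finset.sum_sub_distrib]
    refine Finset.sum_congr rfl fun p hp => ?_
    ring
  rw [h4] at h2
  refine le_of_mul_le_mul_left ?_ hN'
  linarith

lemma hr_zeta (s : ℝ) (hs : 1 < s) (N : ℕ) :
    ∑ p ∈ N.primesLE, (p:ℝ) ^ (-s) ≤ Real.log (1 / (s-1) + 1) := by
  have hs0 : -s ≠ 0 := by linarith
  let f : ℕ →* ℝ := 
    { toFun := fun n => (n:ℝ) ^ (-s)
      map_one' := by simp
      map_mul' := fun a b => by
        push_cast; exact Real.mul_rpow (by positivity) (by positivity) }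
  have hfd : ∀ n, f n = (n:ℝ) ^ (-s) := fun n => rfl
  have hf0 : ∀ n, 0 ≤ f n := fun n => by rw [hfd]; positivity
  have hsum : Summable (f : ℕ → ℝ) := by
    exact Real.summable_nat_rpow.2 (by linarith)
  have h1 := EulerProduct.prod_primesBelow_geometric_eq_tsum_smoothNumbers hsum (N+1)
  have h2 : ∑' m : (N+1).smoothNumbers, f m ≤ ∑' n, f n := hsum.tsum_subtype_le f _ hf0
  have h3 : ∑' n, f n ≤ 1/(s-1) + 1 := by
    rw [hsum.tsum_eq_zero_add]
    have h4 := ZetaAsymptotics.zeta_limit_aux1 hs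
    have h5 : 0 ≤ ZetaAsymptotics.termTSum s := tsum_nonneg fun n => ZetaAsymptotics.term_nonneg _ _
    have h6 : ∑' n : ℕ, f (n+1) = ∑' n : ℕ, 1 / (n + 1 : ℝ) ^ s := by
      refine tsum_congr fun n => ?_
      rw [hfd, Real.rpow_neg (by positivity)]; push_cast; rw [one_div]
    rw [h6, hfd]
    have : ((0:ℕ):ℝ) ^ (-s) = 0 := by simp [Real.zero_rpow hs0]
    rw [this]
    nlinarith
  rw [Real.le_log_iff_exp_le (by have := one_div_pos.2 (sub_pos.2 hs); linarith), Real.exp_sum]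
  refine le_trans ?_ (h1.le.trans (h2.trans h3))
  have : N.primesLE = (N+1).primesBelow := by
    ext p; rw [Nat.mem_primesLE, Nat.mem_primesBelow]; simp [Nat.lt_succ_iff]
  rw [this]
  refine Finset.prod_le_prod (fun _ _ => (Real.exp_pos _).le) fun p hp => ?_
  have hp2 := (Nat.mem_primesBelow.1 hp).2
  rw [hfd]
  have hlt : (p:ℝ)^(-s) < 1 := Real.rpow_lt_one_of_one_lt_of_neg (by exact_mod_cast hp2.one_lt) (by linarith)
  rw [← Real.exp_log (show 0 < (1 - (p:ℝ)^(-s))⁻¹ from inv_pos.2 (by linarith)), Real.exp_le_exp, Real.log_inv]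
  have := Real.log_le_sub_one_of_pos (show 0 < 1 - (p:ℝ)^(-s) by linarith)
  linarith

lemma hr_mertens2 (N : ℕ) (hN : 2 ≤ N) :
    ∑ p ∈ N.primesLE, (1:ℝ) / p ≤ Real.log (Real.log N + 1) + 3 := by
  have hN2 : (2:ℝ) ≤ N := by exact_mod_cast hN
  have hL : 0 < Real.log N := Real.log_pos (by linarith)
  have hL2 : Real.log 2 ≤ Real.log N := Real.log_le_log (by norm_num) hN2
  have h1 := hr_zeta (1 + 1 / Real.log N) (by have := one_div_pos.2 hL; linarith) N
  have h2 := hr_mertens1 N hN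
  have h3 : ∑ p ∈ N.primesLE, (1:ℝ) / p ≤ ∑ p ∈ N.primesLE, ((p:ℝ) ^ (-(1 + 1 / Real.log N)) + (Real.log p / p) / Real.log N) := by
    refine Finset.sum_le_sum fun p hp => ?_
    have hp2 := (Nat.mem_primesLE.1 hp).2
    have hp0 : (0:ℝ) < p := by exact_mod_cast hp2.pos
    have h4 : (p:ℝ) ^ (-(1 + 1 / Real.log N)) = (1/p) * Real.exp (-(Real.log p / Real.log N)) := by
      have hi : (1:ℝ) / p = Real.exp (-Real.log p) := by
        rw [Real.exp_neg, Real.exp_log hp0, one_div]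
      rw [Real.rpow_def_of_pos hp0, hi, ← Real.exp_add]
      congr 1; ring
    rw [h4]
    have h5 := Real.add_one_le_exp (-(Real.log p / Real.log N))
    have h6 : (1/(p:ℝ)) * (-(Real.log p / Real.log N) + 1) ≤ (1/p) * Real.exp (-(Real.log p / Real.log N)) := by gcongr
    refine le_trans (le_of_eq ?_) (add_le_add_left h6 _)
    ring
  rw [Finset.sum_add_distrib, ← Finset.sum_div] at h3
  have h4 : (∑ p ∈ N.primesLE, Real.log p / p) / Real.log N ≤ 3 := by
    rw [div_le_iff₀ hL]
    have : Real.log 4 = 2 * Real.log 2 := by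
      rw [show (4:ℝ) = 2 ^ 2 by norm_num, Real.log_pow]; norm_num
    linarith
  have h5 : (1 / (1 + 1 / Real.log N - 1) + 1) = Real.log N + 1 := by
    rw [add_sub_cancel_left, one_div_one_div]
  rw [h5] at h1
  linarith

theorem hardy_ramanujan_short_interval :
    ∃ c K : ℝ, 0 < c ∧ 0 < K ∧
      ∀ σ X Y : ℝ, 1 / 2 ≤ σ → σ ≤ 1 → 10 ≤ X → X ^ σ ≤ Y → Y ≤ X →
      ∀ ν : ℕ, 1 ≤ ⌊σ * (ν : ℝ)⌋₊ →
        (((Finset.Icc ⌈X⌉₊ ⌊X + Y⌋₊).filter fun n =>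
            Squarefree n ∧ n.primeFactors.card = ν).card : ℝ) ≤
          K * Y * (Real.log (Real.log X) + c) ^ ⌊σ * (ν : ℝ)⌋₊ /
            (Nat.factorial (⌊σ * (ν : ℝ)⌋₊ - 1)) := by
  refine ⟨5, 3, by norm_num, by norm_num, ?_⟩
  intro σ X Y hσ hσ1 hX hXY hYX ν hk
  set k := ⌊σ * (ν : ℝ)⌋₊ with hkdef
  have hY : 0 < Y := lt_of_lt_of_le (Real.rpow_pos_of_pos (by linarith) _) hXY
  have hkν : (k:ℝ) ≤ σ * ν := Nat.floor_le (by positivity)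
  have hkν2 : k ≤ ν := by
    have : (k:ℝ) ≤ ν := hkν.trans (mul_le_of_le_one_left (by positivity) hσ1)
    exact_mod_cast this
  set N := ⌊X + Y⌋₊ with hNdef
  have hN2 : 2 ≤ N := Nat.le_floor (by push_cast; linarith)
  have hNX : (N:ℝ) ≤ 2 * X := (Nat.floor_le (by linarith)).trans (by linarith)
  have hlogX : 1 < Real.log X := by
    rw [Real.lt_log_iff_exp_lt (by linarith)]
    have := Real.exp_one_lt_d9
    linarith
  set F := ∑ p ∈ N.primesLE, (1:ℝ) / p with hF
  have hF0 : 0 ≤ F := Finset.sum_nonneg fun _ _ => by positivity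
  have hFle : F ≤ Real.log (Real.log X) + 5 := by
    refine (hr_mertens2 N hN2).trans ?_
    have h1 : Real.log N ≤ Real.log 2 + Real.log X := by
      rw [← Real.log_mul (by norm_num) (by linarith)]
      exact Real.log_le_log (by positivity) hNX
    have h2 := Real.log_two_lt_d9
    have hN0 : 0 ≤ Real.log N := Real.log_natCast_nonneg N
    have h3 : Real.log (Real.log N + 1) ≤ Real.log (3 * Real.log X) :=
      Real.log_le_log (by linarith) (by linarith)
    rw [Real.log_mul (by norm_num) (by linarith)] at h3
    have h4 : Real.log 3 ≤ 3 - 1 := Real.log_le_sub_one_of_pos (by norm_num)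
    linarith
  set W := (N.primesLE.powersetCard k).filter fun T => ((∏ p ∈ T, p : ℕ) : ℝ) ≤ 2 * Y with hW
  have hsub : ((Finset.Icc ⌈X⌉₊ N).filter fun n => Squarefree n ∧ n.primeFactors.card = ν) ⊆
      W.biUnion fun T => (Finset.Icc ⌈X⌉₊ N).filter fun n => (∏ p ∈ T, p) ∣ n := by
    intro n hn
    obtain ⟨hnI, hsq, hω⟩ := Finset.mem_filter.1 hn
    have hnN := (Finset.mem_Icc.1 hnI).2
    have hn0 : n ≠ 0 := hsq.ne_zero
    obtain ⟨T, hT, hTc, hTp⟩ := hr_small k hk ν n.primeFactors hω hkν2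
      (fun p hp => (Nat.prime_of_mem_primeFactors hp).one_le)
    rw [Nat.prod_primeFactors_of_squarefree hsq] at hTp
    have hdvd : (∏ p ∈ T, p) ∣ n := by
      conv_rhs => rw [← Nat.prod_primeFactors_of_squarefree hsq]
      exact Finset.prod_dvd_prod_of_subset _ _ _ hT
    refine Finset.mem_biUnion.2 ⟨T, ?_, Finset.mem_filter.2 ⟨hnI, hdvd⟩⟩
    refine Finset.mem_filter.2 ⟨Finset.mem_powersetCard.2 ⟨fun p hp => ?_, hTc⟩, ?_⟩
    · have hp' := hT hp
      exact Nat.mem_primesLE.2 ⟨(Nat.le_of_mem_primeFactors hp').trans hnN, Nat.prime_of_mem_primeFactors hp'⟩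
    · set D := ∏ p ∈ T, p
      have hν0 : (0:ℝ) < ν := by
        have : 0 < ν := by omega
        exact_mod_cast this
      have hn1 : (1:ℝ) ≤ n := by exact_mod_cast Nat.one_le_iff_ne_zero.2 hn0
      have h1 : (D:ℝ) ^ ν ≤ (n:ℝ) ^ k := by exact_mod_cast hTp
      have h2 : (D:ℝ) ^ ν ≤ ((n:ℝ) ^ σ) ^ ν := by
        refine h1.trans ?_
        rw [← Real.rpow_natCast, ← Real.rpow_natCast, ← Real.rpow_mul (by linarith)]
        exact Real.rpow_le_rpow_of_exponent_le hn1 hkν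
      have h3 : (D:ℝ) ≤ (n:ℝ) ^ σ := le_of_pow_le_pow_left₀ (by omega) (by positivity) h2
      refine h3.trans ?_
      have hnX : (n:ℝ) ≤ 2 * X := le_trans (by exact_mod_cast hnN) hNX
      calc (n:ℝ) ^ σ ≤ (2 * X) ^ σ := Real.rpow_le_rpow (by linarith) hnX (by linarith)
        _ = 2 ^ σ * X ^ σ := Real.mul_rpow (by norm_num) (by linarith)
        _ ≤ 2 * Y := by
          refine mul_le_mul ?_ hXY (Real.rpow_nonneg (by linarith) _) (by norm_num)
          calc (2:ℝ) ^ σ ≤ 2 ^ (1:ℝ) := Real.rpow_le_rpow_of_exponent_le (by norm_num) hσ1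
            _ = 2 := by simp
  have h1 : (((Finset.Icc ⌈X⌉₊ N).filter fun n =>
            Squarefree n ∧ n.primeFactors.card = ν).card : ℝ) ≤
      ∑ T ∈ W, (((Finset.Icc ⌈X⌉₊ N).filter fun n => (∏ p ∈ T, p) ∣ n).card : ℝ) := by
    exact_mod_cast (Finset.card_le_card hsub).trans Finset.card_biUnion_le
  have h2 : ∑ T ∈ W, (((Finset.Icc ⌈X⌉₊ N).filter fun n => (∏ p ∈ T, p) ∣ n).card : ℝ) ≤
      ∑ T ∈ W, 3 * Y * ∏ p ∈ T, (1:ℝ) / p := by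
    refine Finset.sum_le_sum fun T hT => ?_
    obtain ⟨hT1, hT2⟩ := Finset.mem_filter.1 hT
    have hpos : 0 < ∏ p ∈ T, p := Finset.prod_pos fun p hp =>
      (Nat.mem_primesLE.1 ((Finset.mem_powersetCard.1 hT1).1 hp)).2.pos
    refine (hr_mult X Y (by linarith) hY.le _ hpos).trans ?_
    have h3 : ∏ p ∈ T, (1:ℝ) / p = 1 / ((∏ p ∈ T, p : ℕ) : ℝ) := by
      rw [Finset.prod_div_distrib]; simp
    rw [h3]
    have hpos' : (0:ℝ) < ((∏ p ∈ T, p : ℕ) : ℝ) := by exact_mod_cast hpos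
    generalize ((∏ p ∈ T, p : ℕ) : ℝ) = D at *
    rw [mul_one_div, le_div_iff₀ hpos', add_mul, div_mul_cancel₀ _ hpos'.ne']
    linarith
  have h3 : ∑ T ∈ W, 3 * Y * ∏ p ∈ T, (1:ℝ) / p ≤ 3 * Y * (F ^ k / k.factorial) := by
    rw [← Finset.mul_sum]
    refine mul_le_mul_of_nonneg_left ?_ (by linarith)
    refine le_trans ?_ (hr_esymm (f := fun p => (1:ℝ) / p) (fun n => by positivity) N.primesLE k)
    exact Finset.sum_le_sum_of_subset_of_nonneg (Finset.filter_subset _ _)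
      (fun _ _ _ => Finset.prod_nonneg fun _ _ => by positivity)
  refine h1.trans (h2.trans (h3.trans ?_))
  rw [mul_div_assoc]
  refine mul_le_mul_of_nonneg_left ?_ (by linarith)
  refine div_le_div₀ (by have := hF0.trans hFle; positivity) (pow_le_pow_left₀ hF0 hFle k) (by positivity) ?_
  exact_mod_cast Nat.factorial_le (Nat.sub_le k 1)
end

section
/- There is an absolute constant K > 0 such that for every real σ ∈ [1/2, 1], every real X ≥ 10, every real Y with X^σ ≤ Y ≤ X, and every natural number k with 1 ≤ k ≤ log X, one has ∑_{n ∈ [X, X+Y], n squarefree} τ_k(n) ≤ K · Y · (log X)^4 · exp(2 · k^{1/σ} · log log X). -/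
open Finset

lemma tauk_le (k n : ℕ) (hn : Squarefree n) : tauk k n ≤ k ^ n.primeFactors.card := by
  have h := Nat.card_finMulAntidiag_of_squarefree (d := k) hn
  rw [ArithmeticFunction.cardDistinctFactors_apply] at h
  have h2 : n.primeFactorsList.dedup.length = n.primeFactors.card := rfl
  rw [← h2, ← h]
  apply Finset.card_le_card
  intro f hf
  rw [Finset.mem_filter] at hf
  exact Nat.mem_finMulAntidiag.2 ⟨hf.2, hn.ne_zero⟩

lemma exists_small_sub (P : Finset ℕ) : ∀ m ≤ P.card, ∃ S ⊆ P, S.card = m ∧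
    (∏ p ∈ S, p) ^ P.card ≤ (∏ p ∈ P, p) ^ m := by
  induction P using Finset.induction_on_max with
  | empty => intro m hm; exact ⟨∅, by simp, by simp_all⟩
  | insert a P hP ih =>
    intro m hm
    have ha : a ∉ P := fun h => lt_irrefl _ (hP a h)
    rw [Finset.card_insert_of_notMem ha] at hm
    rcases Nat.lt_or_ge P.card m with h | h
    · refine ⟨insert a P, subset_rfl, ?_⟩
      have : m = P.card + 1 := by omega
      rw [Finset.card_insert_of_notMem ha, this]
      exact ⟨rfl, le_rfl⟩
    · obtain ⟨S, hS, hc, hp⟩ := ih m h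
      refine ⟨S, hS.trans (Finset.subset_insert _ _), hc, ?_⟩
      rw [Finset.card_insert_of_notMem ha, Finset.prod_insert ha, pow_succ, mul_pow, mul_comm]
      apply Nat.mul_le_mul _ hp
      rw [← hc]
      exact Finset.prod_le_pow_card _ _ _ fun x hx => (hP x (hS hx)).le

lemma exists_div (σ : ℝ) (h0 : 1 / 2 ≤ σ) (h1 : σ ≤ 1) (k : ℕ) (hk : 1 ≤ k) (n : ℕ)
    (hn : Squarefree n) : ∃ S ⊆ n.primeFactors, ((∏ p ∈ S, p : ℕ) : ℝ) ≤ (n : ℝ) ^ σ ∧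
      ((k : ℝ) ^ n.primeFactors.card) ≤ (k : ℝ) ^ (1 / σ) * ((k : ℝ) ^ (1 / σ)) ^ S.card := by
  set w := n.primeFactors.card with hw
  have hσ : 0 < σ := by linarith
  have hk1 : (1 : ℝ) ≤ k := by exact_mod_cast hk
  have hn1 : (1 : ℝ) ≤ n := by exact_mod_cast Nat.one_le_iff_ne_zero.2 hn.ne_zero
  have hfl : (⌊σ * w⌋₊ : ℝ) ≤ σ * w := Nat.floor_le (by positivity)
  have hfl2 : σ * w < ⌊σ * w⌋₊ + 1 := Nat.lt_floor_add_one _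
  have hm : ⌊σ * w⌋₊ ≤ w := by
    have : σ * w ≤ w := by nlinarith [(Nat.cast_nonneg w : (0:ℝ) ≤ w)]
    exact_mod_cast hfl.trans this
  obtain ⟨S, hS, hc, hp⟩ := exists_small_sub n.primeFactors _ hm
  refine ⟨S, hS, ?_, ?_⟩
  · rw [Nat.prod_primeFactors_of_squarefree hn] at hp
    rcases Nat.eq_zero_or_pos w with h | h
    · have : S = ∅ := by
        rw [← Finset.card_eq_zero, hc, h]; simp
      rw [this]
      simpa using Real.one_le_rpow hn1 hσ.le
    · have hwp : (0 : ℝ) < w := by exact_mod_cast h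
      have hp' : ((∏ p ∈ S, p : ℕ) : ℝ) ^ w ≤ (n : ℝ) ^ ⌊σ * w⌋₊ := by exact_mod_cast hp
      have : ((∏ p ∈ S, p : ℕ) : ℝ) ^ w ≤ ((n : ℝ) ^ σ) ^ w := by
        refine hp'.trans ?_
        rw [← Real.rpow_natCast, ← Real.rpow_natCast, ← Real.rpow_mul (by linarith)]
        exact Real.rpow_le_rpow_of_exponent_le hn1 hfl
      exact le_of_pow_le_pow_left₀ h.ne' (by positivity) this
  · rw [← pow_succ', hc, ← Real.rpow_natCast, ← Real.rpow_natCast, ← Real.rpow_mul (by linarith)]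
    apply Real.rpow_le_rpow_of_exponent_le hk1
    rw [div_mul_eq_mul_div, le_div_iff₀ hσ]
    push_cast
    linarith

lemma count_le (A : Finset ℕ) (X Y : ℝ) (hX : 0 ≤ X) (hY : 0 ≤ Y)
    (hA : ∀ n ∈ A, X ≤ n ∧ (n : ℝ) ≤ X + Y) (d : ℕ) (hd : 0 < d) :
    ((A.filter fun n => d ∣ n).card : ℝ) ≤ Y / d + 1 := by
  have hd' : (0 : ℝ) < d := by exact_mod_cast hd
  have h1 : (A.filter fun n => d ∣ n).card ≤ (Finset.Icc ⌈X / d⌉₊ ⌊(X + Y) / d⌋₊).card := by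
    apply Finset.card_le_card_of_injOn (fun n => n / d)
    · intro n hn
      simp only [Finset.coe_filter, Set.mem_ofPred_eq] at hn
      obtain ⟨hn, m, rfl⟩ := hn
      have := hA _ hn
      push_cast at this
      simp only [Finset.coe_Icc, Set.mem_Icc, Nat.mul_div_cancel_left m hd]
      constructor
      · rw [Nat.ceil_le, div_le_iff₀ hd']; linarith
      · apply Nat.le_floor; rw [le_div_iff₀ hd']; linarith
    · intro a ha b hb hab
      simp only [Finset.coe_filter, Set.mem_ofPred_eq] at ha hb
      exact (Nat.div_left_inj ha.2 hb.2).1 hab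
  rw [Nat.card_Icc] at h1
  have h2 : (⌊(X + Y) / d⌋₊ : ℝ) ≤ (X + Y) / d := Nat.floor_le (by positivity)
  have h3 : X / d ≤ ⌈X / d⌉₊ := Nat.le_ceil _
  have h5 : (X + Y) / d = X / d + Y / d := add_div _ _ _
  rcases Nat.lt_or_ge (⌊(X + Y) / d⌋₊ + 1) ⌈X / d⌉₊ with h | h
  · have : (A.filter fun n => d ∣ n).card = 0 := by omega
    rw [this]; simp; positivity
  · have h4 : (A.filter fun n => d ∣ n).card + ⌈X / d⌉₊ ≤ ⌊(X + Y) / d⌋₊ + 1 := by omega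
    have h4' : ((A.filter fun n => d ∣ n).card : ℝ) + ⌈X / d⌉₊ ≤ ⌊(X + Y) / d⌋₊ + 1 := by
      exact_mod_cast h4
    linarith

lemma loglog_step (N : ℕ) (hN : 2 ≤ N) :
    1 / (((N + 1 : ℕ) : ℝ) * Real.log (N + 1 : ℕ)) ≤
      Real.log (Real.log (N + 1 : ℕ)) - Real.log (Real.log N) := by
  have hN' : (2 : ℝ) ≤ N := by exact_mod_cast hN
  have l1 : 0 < Real.log N := Real.log_pos (by linarith)
  have l2 : 0 < Real.log (N + 1 : ℕ) := Real.log_pos (by push_cast; linarith)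
  have a1 : 1 / ((N + 1 : ℕ) : ℝ) ≤ Real.log (N + 1 : ℕ) - Real.log N := by
    have := Real.one_sub_inv_le_log_of_pos (x := ((N + 1 : ℕ) : ℝ) / N) (by positivity)
    rw [Real.log_div (by positivity) (by positivity)] at this
    refine le_trans (le_of_eq ?_) this
    push_cast
    field_simp
    ring
  have a2 := Real.one_sub_inv_le_log_of_pos (x := Real.log (N + 1 : ℕ) / Real.log N) (by positivity)
  rw [Real.log_div (by positivity) (by positivity)] at a2
  refine le_trans ?_ a2
  rw [inv_div, ← div_div, one_sub_div l2.ne']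
  gcongr

lemma sum_inv_aux (N : ℕ) (hN : 2 ≤ N) :
    ∑ p ∈ (Finset.Ioc 0 N).filter Nat.Prime, 1 / (p : ℝ) +
      (Real.log 4 * N - Chebyshev.theta N) * (1 / (N * Real.log N)) ≤
    Real.log 4 * Real.log (Real.log N) +
    (∑ p ∈ (Finset.Ioc 0 2).filter Nat.Prime, 1 / (p : ℝ) +
      (Real.log 4 * (2 : ℕ) - Chebyshev.theta (2 : ℕ)) * (1 / ((2 : ℕ) * Real.log (2 : ℕ)))
      - Real.log 4 * Real.log (Real.log (2 : ℕ))) := by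
  induction N, hN using Nat.le_induction with
  | base => linarith
  | succ N hN ih =>
    have hN' : (2 : ℝ) ≤ N := by exact_mod_cast hN
    have l1 : 0 < Real.log N := Real.log_pos (by linarith)
    have l2 : 0 < Real.log (N + 1 : ℕ) := Real.log_pos (by push_cast; linarith)
    have hst := loglog_step N hN
    have h4 : 0 < Real.log 4 := Real.log_pos (by norm_num)
    have hth : 0 ≤ Real.log 4 * N - Chebyshev.theta N :=
      sub_nonneg.2 (Chebyshev.theta_le_log4_mul_x (by positivity))
    have hmono : 1 / (((N + 1 : ℕ) : ℝ) * Real.log (N + 1 : ℕ)) ≤ 1 / (N * Real.log N) := by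
      have : (N : ℝ) ≤ (N + 1 : ℕ) := by push_cast; linarith
      gcongr
    have hI : Finset.Ioc 0 (N + 1) = insert (N + 1) (Finset.Ioc 0 N) := by
      ext x; simp; omega
    have key : ∑ p ∈ (Finset.Ioc 0 (N + 1)).filter Nat.Prime, 1 / (p : ℝ)
        - ∑ p ∈ (Finset.Ioc 0 N).filter Nat.Prime, 1 / (p : ℝ) =
        (Chebyshev.theta (N + 1 : ℕ) - Chebyshev.theta N) *
          (1 / (((N + 1 : ℕ) : ℝ) * Real.log (N + 1 : ℕ))) := by
      unfold Chebyshev.theta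
      rw [Nat.floor_natCast, Nat.floor_natCast, hI, Finset.filter_insert]
      split_ifs with hp
      · rw [Finset.sum_insert (by simp), Finset.sum_insert (by simp)]
        field_simp
        ring
      · simp
    set f1 := 1 / (((N + 1 : ℕ) : ℝ) * Real.log (N + 1 : ℕ))
    set f0 := 1 / ((N : ℝ) * Real.log N)
    have e : (((N + 1 : ℕ) : ℝ)) = N + 1 := by push_cast; ring
    have m1 := mul_le_mul_of_nonneg_left hst h4.le
    have m2 := mul_le_mul_of_nonneg_left hmono hth
    have e2 : Real.log 4 * ((N + 1 : ℕ) : ℝ) = Real.log 4 * N + Real.log 4 := by rw [e]; ring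
    rw [e2]
    linarith

lemma sum_inv_le : ∃ C : ℝ, 0 ≤ C ∧ ∀ N : ℕ, 2 ≤ N →
    ∑ p ∈ (Finset.Ioc 0 N).filter Nat.Prime, 1 / (p : ℝ) ≤
      Real.log 4 * Real.log (Real.log N) + C := by
  obtain ⟨B, hB⟩ : ∃ B : ℝ, ∀ N : ℕ, 2 ≤ N →
      ∑ p ∈ (Finset.Ioc 0 N).filter Nat.Prime, 1 / (p : ℝ) +
      (Real.log 4 * N - Chebyshev.theta N) * (1 / (N * Real.log N)) ≤
      Real.log 4 * Real.log (Real.log N) + B := ⟨_, sum_inv_aux⟩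
  refine ⟨max 0 B, le_max_left _ _, fun N hN => ?_⟩
  · have h := hB N hN
    have hN' : (2 : ℝ) ≤ N := by exact_mod_cast hN
    have l1 : 0 < Real.log N := Real.log_pos (by linarith)
    have hth : 0 ≤ Real.log 4 * N - Chebyshev.theta N :=
      sub_nonneg.2 (Chebyshev.theta_le_log4_mul_x (by positivity))
    have : 0 ≤ (Real.log 4 * N - Chebyshev.theta N) * (1 / (N * Real.log N)) := by positivity
    refine (le_add_of_nonneg_right this).trans (h.trans ?_)
    gcongr
    exact le_max_right _ _

lemma core (A : Finset ℕ) (σ X Y : ℝ) (h0 : 1 / 2 ≤ σ) (h1 : σ ≤ 1) (hX : 10 ≤ X)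
    (hXY : X ^ σ ≤ Y) (hYX : Y ≤ X) (k : ℕ) (hk : 1 ≤ k)
    (hA : ∀ n ∈ A, Squarefree n ∧ X ≤ n ∧ (n : ℝ) ≤ X + Y) :
    ∑ n ∈ A, (tauk k n : ℝ) ≤ 3 * Y * (k : ℝ) ^ (1 / σ) * Real.exp ((k : ℝ) ^ (1 / σ) *
      ∑ p ∈ (Finset.Ioc 0 ⌊2 * X⌋₊).filter Nat.Prime, 1 / (p : ℝ)) := by
  classical
  set κ : ℝ := (k : ℝ) ^ (1 / σ) with hκ
  have hκ0 : 0 ≤ κ := by positivity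
  have hY0 : 0 < Y := lt_of_lt_of_le (by positivity) hXY
  set P := (Finset.Ioc 0 ⌊2 * X⌋₊).filter Nat.Prime with hP
  set T := P.powerset.filter (fun S => ((∏ p ∈ S, p : ℕ) : ℝ) ≤ 2 * Y) with hT
  have step1 : ∀ n ∈ A, (tauk k n : ℝ) ≤
      ∑ S ∈ T, if (∏ p ∈ S, p) ∣ n then κ * κ ^ S.card else 0 := by
    intro n hn
    obtain ⟨hs, hn1, hn2⟩ := hA n hn
    obtain ⟨S, hS, hd, hle⟩ := exists_div σ h0 h1 k hk n hs
    have t1 : (tauk k n : ℝ) ≤ (k : ℝ) ^ n.primeFactors.card := by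
      exact_mod_cast tauk_le k n hs
    have hdvd : (∏ p ∈ S, p) ∣ n := by
      conv_rhs => rw [← Nat.prod_primeFactors_of_squarefree hs]
      exact Finset.prod_dvd_prod_of_subset _ _ _ hS
    have hST : S ∈ T := by
      rw [hT, Finset.mem_filter, Finset.mem_powerset]
      constructor
      · intro p hp
        have := hS hp
        rw [hP, Finset.mem_filter, Finset.mem_Ioc]
        have hpp := Nat.prime_of_mem_primeFactors this
        refine ⟨⟨hpp.pos, ?_⟩, hpp⟩
        exact (Nat.le_of_mem_primeFactors this).trans (Nat.le_floor (by linarith))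
      · refine hd.trans ?_
        calc (n : ℝ) ^ σ ≤ (2 * X) ^ σ :=
              Real.rpow_le_rpow (by positivity) (by linarith) (by linarith)
          _ = 2 ^ σ * X ^ σ := Real.mul_rpow (by norm_num) (by linarith)
          _ ≤ 2 ^ (1 : ℝ) * Y := by
              apply mul_le_mul _ hXY (by positivity) (by positivity)
              exact Real.rpow_le_rpow_of_exponent_le (by norm_num) h1
          _ = 2 * Y := by norm_num
    refine t1.trans (hle.trans ?_)
    have := Finset.single_le_sum (s := T)
      (f := fun S => if (∏ p ∈ S, p) ∣ n then κ * κ ^ S.card else 0)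
      (fun S _ => by split_ifs <;> positivity) hST
    simpa only [if_pos hdvd] using this
  calc ∑ n ∈ A, (tauk k n : ℝ)
      ≤ ∑ n ∈ A, ∑ S ∈ T, if (∏ p ∈ S, p) ∣ n then κ * κ ^ S.card else 0 :=
        Finset.sum_le_sum step1
    _ = ∑ S ∈ T, ((A.filter fun n => (∏ p ∈ S, p) ∣ n).card : ℝ) * (κ * κ ^ S.card) := by
        rw [Finset.sum_comm]
        refine Finset.sum_congr rfl fun S _ => ?_
        rw [← Finset.sum_filter, Finset.sum_const, nsmul_eq_mul]
    _ ≤ ∑ S ∈ T, 3 * Y * κ * ∏ p ∈ S, (κ * (1 / (p : ℝ))) := by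
        refine Finset.sum_le_sum fun S hS => ?_
        rw [hT, Finset.mem_filter, Finset.mem_powerset] at hS
        have hpos : 0 < ∏ p ∈ S, p := Finset.prod_pos fun p hp => by
          have := hS.1 hp
          rw [hP, Finset.mem_filter] at this
          exact this.2.pos
        have hc := count_le A X Y (by linarith) hY0.le (fun n hn => (hA n hn).2) _ hpos
        have hd' : (0 : ℝ) < (∏ p ∈ S, p : ℕ) := by exact_mod_cast hpos
        have h3 : Y / (∏ p ∈ S, p : ℕ) + 1 ≤ 3 * Y / (∏ p ∈ S, p : ℕ) := by
          rw [div_add_one hd'.ne']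
          gcongr
          linarith [hS.2]
        have e : ∏ p ∈ S, (κ * (1 / (p : ℝ))) = κ ^ S.card * (1 / (∏ p ∈ S, p : ℕ)) := by
          rw [Finset.prod_mul_distrib, Finset.prod_const]
          congr 1
          push_cast
          simp
        rw [e]
        calc _ ≤ 3 * Y / (∏ p ∈ S, p : ℕ) * (κ * κ ^ S.card) := by
              gcongr
              exact hc.trans h3
          _ = _ := by ring
    _ ≤ ∑ S ∈ P.powerset, 3 * Y * κ * ∏ p ∈ S, (κ * (1 / (p : ℝ))) := by
        apply Finset.sum_le_sum_of_subset_of_nonneg (Finset.filter_subset _ _)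
        intros
        positivity
    _ = 3 * Y * κ * ∏ p ∈ P, (1 + κ * (1 / (p : ℝ))) := by
        rw [← Finset.mul_sum, Finset.prod_one_add]
    _ ≤ _ := by
        rw [Finset.mul_sum]
        gcongr
        exact Real.prod_one_add_le_exp_sum _ fun p => by positivity

open scoped Classical

theorem sum_tauk_squarefree_short_interval :
    ∃ K : ℝ, 0 < K ∧
      ∀ σ X Y : ℝ, 1 / 2 ≤ σ → σ ≤ 1 → 10 ≤ X → X ^ σ ≤ Y → Y ≤ X →
      ∀ k : ℕ, 1 ≤ k → (k : ℝ) ≤ Real.log X →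
        ∑ n ∈ (Finset.Icc ⌈X⌉₊ ⌊X + Y⌋₊).filter fun n => Squarefree n, (tauk k n : ℝ) ≤
          K * Y * Real.log X ^ (4 : ℕ) *
            Real.exp (2 * (k : ℝ) ^ (1 / σ) * Real.log (Real.log X)) := by
  obtain ⟨C, hC0, hC⟩ := sum_inv_le
  set D : ℝ := C + 2 with hD
  refine ⟨3 * Real.exp (D * Real.exp (4 * D)), by positivity, ?_⟩
  intro σ X Y h0 h1 hX hXY hYX k hk hkX
  have hY0 : 0 < Y := lt_of_lt_of_le (by positivity) hXY
  have hcore := core X Y h0 h1 hX hXY hYX k hk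
    (σ := σ) (A := (Finset.Icc ⌈X⌉₊ ⌊X + Y⌋₊).filter fun n => Squarefree n) (by
      intro n hn
      rw [Finset.mem_filter, Finset.mem_Icc, Nat.ceil_le] at hn
      refine ⟨hn.2, hn.1.1, ?_⟩
      exact (Nat.le_floor_iff (by linarith)).1 hn.1.2)
  refine hcore.trans ?_
  have hk1 : (1 : ℝ) ≤ k := by exact_mod_cast hk
  have hL1 : 1 ≤ Real.log X := hk1.trans hkX
  set κ : ℝ := (k : ℝ) ^ (1 / σ) with hκ
  have hκ0 : 0 ≤ κ := by positivity
  have hσ : 0 < σ := by linarith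
  have hκ2 : κ ≤ Real.log X ^ 2 := by
    calc κ ≤ (k : ℝ) ^ (2 : ℝ) := by
          apply Real.rpow_le_rpow_of_exponent_le hk1
          rw [div_le_iff₀ hσ]; linarith
      _ = (k : ℝ) ^ 2 := by norm_num
      _ ≤ _ := by gcongr
  have hκ4 : κ ≤ Real.log X ^ 4 := hκ2.trans (pow_le_pow_right₀ hL1 (by norm_num))
  set L := Real.log (Real.log X) with hL
  have hL0 : 0 ≤ L := Real.log_nonneg hL1
  have hlog4 : Real.log 4 ≤ 3 / 2 := by
    have : (4 : ℝ) = 2 ^ 2 := by norm_num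
    rw [this, Real.log_pow]
    have := Real.log_two_lt_d9
    push_cast
    linarith
  have hlog4' : 0 < Real.log 4 := Real.log_pos (by norm_num)
  have hfl : 2 ≤ ⌊2 * X⌋₊ := Nat.le_floor (by push_cast; linarith)
  have hlogf : Real.log (Real.log ⌊2 * X⌋₊) ≤ L + 1 := by
    have hf2 : (2 : ℝ) ≤ ⌊2 * X⌋₊ := by exact_mod_cast hfl
    have hf3 : (⌊2 * X⌋₊ : ℝ) ≤ 2 * X := Nat.floor_le (by linarith)
    have a : Real.log ⌊2 * X⌋₊ ≤ 2 * Real.log X := by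
      calc Real.log ⌊2 * X⌋₊ ≤ Real.log (X ^ 2) := by
            apply Real.log_le_log (by linarith)
            nlinarith
        _ = 2 * Real.log X := by rw [Real.log_pow]; norm_num
    calc Real.log (Real.log ⌊2 * X⌋₊) ≤ Real.log (2 * Real.log X) :=
          Real.log_le_log (Real.log_pos (by linarith)) a
      _ = Real.log 2 + L := Real.log_mul (by norm_num) (by linarith)
      _ ≤ L + 1 := by linarith [Real.log_two_lt_d9]
  have hsum : ∑ p ∈ (Finset.Ioc 0 ⌊2 * X⌋₊).filter Nat.Prime, 1 / (p : ℝ) ≤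
      3 / 2 * L + D := by
    refine (hC _ hfl).trans ?_
    have : Real.log 4 * Real.log (Real.log ⌊2 * X⌋₊) ≤ Real.log 4 * (L + 1) := by gcongr
    have h' : Real.log 4 * (L + 1) ≤ 3 / 2 * (L + 1) := by gcongr
    linarith
  have hexp : κ * (3 / 2 * L + D) ≤ D * Real.exp (4 * D) + 2 * κ * L := by
    have hD0 : 0 ≤ D := by linarith
    rcases le_total (2 * D) L with h | h
    · have : 0 ≤ D * Real.exp (4 * D) := by positivity
      nlinarith [mul_nonneg hκ0 (sub_nonneg.2 h)]
    · have e1 : Real.log X = Real.exp L := (Real.exp_log (by linarith)).symm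
      have : κ ≤ Real.exp (4 * D) := by
        refine hκ2.trans ?_
        rw [e1, ← Real.exp_nat_mul]
        apply Real.exp_le_exp.2
        push_cast; linarith
      nlinarith [mul_le_mul_of_nonneg_left this hD0, mul_nonneg hκ0 hL0]
  calc _ ≤ 3 * Y * Real.log X ^ 4 * Real.exp (D * Real.exp (4 * D) + 2 * κ * L) := by
        have hs' := mul_le_mul_of_nonneg_left hsum hκ0
        gcongr
        exact hs'.trans hexp
    _ = _ := by rw [Real.exp_add]; ring
end

section
/- Fix α ∈ (0,1). There exist N₀ ∈ ℕ and a constant c > 0 such that for every natural number N ≥ N₀ and every natural number k with (log log N)^3 ≤ k ≤ (log N)^α, one has ∑_{A ≤ N^k} τ_{k,N;α}(A)² ≥ c · N^k · exp( k² / (200 log log N) ). -/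
open Finset

/-- `Ω(n)`: the number of prime factors of `n` counted with multiplicity. -/
def bigOmega (n : ℕ) : ℕ := n.primeFactorsList.length

/-- The set `Γ_α(R)` of `α`-regular integers of height `R`:
integers `1 ≤ m ≤ R` with `Ω(m) ≤ (log R)^α`. -/
noncomputable def Gamma (α : ℝ) (R : ℕ) : Finset ℕ :=
  (Finset.Icc 1 R).filter fun m => (bigOmega m : ℝ) ≤ Real.log R ^ α

/-- The restricted `k`-fold divisor function `τ_{k,R;α}(A)`: the number of `k`-tuples
`(a_1, …, a_k)` with each `a_i ∈ Γ_α(R)` and `a_1 ⋯ a_k = A`. -/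
noncomputable def taukRalpha (k R : ℕ) (α : ℝ) (A : ℕ) : ℕ :=
  ((Fintype.piFinset fun _ : Fin k => Gamma α R).filter fun f => ∏ i, f i = A).card


lemma aux_card_S (P Q : Finset ℕ) (y m : ℕ) (hP : ∀ p ∈ P, p.Prime ∧ p ≤ y)
    (hQ : ∀ q ∈ Q, q.Prime ∧ y < q) :
    (((P.powersetCard m) ×ˢ Q).image (fun x : Finset ℕ × ℕ => (∏ p ∈ x.1, p) * x.2)).card
      = P.card.choose m * Q.card := by
  rw [Finset.card_image_of_injOn, Finset.card_product, Finset.card_powersetCard]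
  have key : ∀ s ∈ P.powersetCard m, ∀ q ∈ Q,
      ((∏ p ∈ s, p) * q).primeFactors = insert q s := by
    intro s hs q hq
    have hsP := (Finset.mem_powersetCard.1 hs).1
    have hqs : q ∉ s := fun h => by
      have := (hP q (hsP h)).2
      have := (hQ q hq).2
      omega
    have h1 : (∏ p ∈ s, p) * q = ∏ p ∈ insert q s, p := by
      rw [Finset.prod_insert hqs, mul_comm]
    rw [h1, Nat.primeFactors_prod]
    intro p hp
    rcases Finset.mem_insert.1 hp with h | h
    · rw [h]; exact (hQ q hq).1
    · exact (hP p (hsP h)).1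
  rintro ⟨s, q⟩ hx ⟨s', q'⟩ hx' h
  simp only [Finset.coe_product, Set.mem_prod, Finset.mem_coe] at hx hx'
  have h1 := key s hx.1 q hx.2
  have h2 := key s' hx'.1 q' hx'.2
  simp only at h
  rw [h, h2] at h1
  have hs := (Finset.mem_powersetCard.1 hx.1).1
  have hs' := (Finset.mem_powersetCard.1 hx'.1).1
  have hss : s = s' := by
    ext a
    have ha : a ∈ insert q' s' ↔ a ∈ insert q s := by rw [h1]
    simp only [Finset.mem_insert] at ha
    constructor
    · intro h
      rcases ha.2 (Or.inr h) with h' | h'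
      · have := (hP a (hs h)).2
        have := (hQ _ hx'.2).2
        omega
      · exact h'
    · intro h
      rcases ha.1 (Or.inr h) with h' | h'
      · have := (hP a (hs' h)).2
        have := (hQ _ hx.2).2
        omega
      · exact h'
  subst hss
  have hpos : 0 < ∏ p ∈ s, p := Finset.prod_pos fun p hp => (hP p (hs hp)).1.pos
  rw [Nat.eq_of_mul_eq_mul_left hpos h]

lemma aux_S_sub (P Q : Finset ℕ) (y m X N : ℕ) (α : ℝ) (hP : ∀ p ∈ P, p.Prime ∧ p ≤ y)
    (hQ : ∀ q ∈ Q, q.Prime ∧ y < q ∧ q ≤ X) (hN : y ^ m * X ≤ N)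
    (hm : (m : ℝ) + 1 ≤ Real.log N ^ α) :
    ((P.powersetCard m) ×ˢ Q).image (fun x : Finset ℕ × ℕ => (∏ p ∈ x.1, p) * x.2)
      ⊆ Gamma α N := by
  intro a ha
  obtain ⟨⟨s, q⟩, hx, rfl⟩ := Finset.mem_image.1 ha
  obtain ⟨hs, hq⟩ := Finset.mem_product.1 hx
  simp only at hs hq ⊢
  obtain ⟨hsP, hsm⟩ := Finset.mem_powersetCard.1 hs
  have hpos : 0 < ∏ p ∈ s, p := Finset.prod_pos fun p hp => (hP p (hsP hp)).1.pos
  have hq0 := (hQ q hq).1.pos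
  unfold Gamma bigOmega
  rw [Finset.mem_filter, Finset.mem_Icc]
  refine ⟨⟨Nat.mul_pos hpos hq0, le_trans (Nat.mul_le_mul ?_ (hQ q hq).2.2) hN⟩, ?_⟩
  · rw [← hsm]
    exact Finset.prod_le_pow_card s _ y fun p hp => (hP p (hsP hp)).2
  · have hqs : q ∉ s := fun h => by
      have := (hP q (hsP h)).2
      have := (hQ q hq).2
      omega
    have h1 : (∏ p ∈ s, p) * q = ∏ p ∈ insert q s, p := by
      rw [Finset.prod_insert hqs, mul_comm]
    have h2 : (insert q s).toList.Perm ((∏ p ∈ s, p) * q).primeFactorsList := by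
      apply Nat.primeFactorsList_unique
      · rw [h1]; exact Finset.prod_toList (insert q s)
      · intro p hp
        rw [Finset.mem_toList] at hp
        rcases Finset.mem_insert.1 hp with h | h
        · rw [h]; exact (hQ q hq).1
        · exact (hP p (hsP h)).1
    rw [← h2.length_eq, Finset.length_toList, Finset.card_insert_of_notMem hqs, hsm]
    push_cast
    exact hm

lemma aux_comb (P Q : Finset ℕ) (z y m X N k : ℕ) (α : ℝ) (hz : 0 < z)
    (hP : ∀ p ∈ P, p.Prime ∧ z ≤ p ∧ p ≤ y)
    (hQ : ∀ q ∈ Q, q.Prime ∧ y < q ∧ q ≤ X) (hN : y ^ m * X ≤ N)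
    (hm : (m : ℝ) + 1 ≤ Real.log N ^ α) :
    (P.card.choose m * Q.card) ^ (2 * k) * z ^ (k * m) ≤
      (P.card + k * m - 1).choose (k * m) * N ^ k *
        ∑ A ∈ Finset.Icc 1 (N ^ k), (taukRalpha k N α A) ^ 2 := by
  set S := ((P.powersetCard m) ×ˢ Q).image (fun x : Finset ℕ × ℕ => (∏ p ∈ x.1, p) * x.2) with hS
  have hSc : S.card = P.card.choose m * Q.card :=
    aux_card_S P Q y m (fun p hp => ⟨(hP p hp).1, (hP p hp).2.2⟩)
      (fun q hq => ⟨(hQ q hq).1, (hQ q hq).2.1⟩)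
  have hSG : S ⊆ Gamma α N :=
    aux_S_sub P Q y m X N α (fun p hp => ⟨(hP p hp).1, (hP p hp).2.2⟩) hQ hN hm
  set T := Fintype.piFinset (fun _ : Fin k => S) with hT
  have hTc : T.card = S.card ^ k := by simp [hT]
  set Im := T.image (fun f => ∏ i, f i) with hIm
  have hmemT : ∀ f ∈ T, ∀ i, f i ∈ S := fun f hf i => by
    rw [hT, Fintype.mem_piFinset] at hf; exact hf i
  have hG : ∀ a ∈ S, 1 ≤ a ∧ a ≤ N := fun a ha => by
    have := hSG ha
    unfold Gamma at this
    exact Finset.mem_Icc.1 (Finset.mem_filter.1 this).1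
  have hImI : Im ⊆ Finset.Icc 1 (N ^ k) := by
    intro A hA
    obtain ⟨f, hf, rfl⟩ := Finset.mem_image.1 hA
    rw [Finset.mem_Icc]
    constructor
    · exact Nat.succ_le_of_lt (Finset.prod_pos fun i _ => (hG _ (hmemT f hf i)).1)
    · have := Finset.prod_le_pow_card (Finset.univ : Finset (Fin k)) f N
        (fun i _ => (hG _ (hmemT f hf i)).2)
      simpa using this
  have h1 : T.card ≤ ∑ A ∈ Im, taukRalpha k N α A := by
    rw [Finset.card_eq_sum_card_image (fun f => ∏ i, f i) T]
    apply Finset.sum_le_sum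
    intro A _
    unfold taukRalpha
    apply Finset.card_le_card
    apply Finset.filter_subset_filter
    exact Fintype.piFinset_subset _ _ fun _ => hSG
  have h2 : T.card ^ 2 ≤ Im.card * ∑ A ∈ Finset.Icc 1 (N ^ k), (taukRalpha k N α A) ^ 2 :=
    calc T.card ^ 2 ≤ (∑ A ∈ Im, taukRalpha k N α A) ^ 2 := Nat.pow_le_pow_left h1 2
      _ ≤ Im.card * ∑ A ∈ Im, (taukRalpha k N α A) ^ 2 := sq_sum_le_card_mul_sum_sq
      _ ≤ _ := Nat.mul_le_mul_left _ (Finset.sum_le_sum_of_subset hImI)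
  have h3 : Im.card ≤ (P.card + k * m - 1).choose (k * m) * (N ^ k / z ^ (k * m)) := by
    have hsub : Im ⊆ ((Finset.univ : Finset (Sym P (k * m))) ×ˢ
        Finset.Icc 1 (N ^ k / z ^ (k * m))).image
        (fun x => ((x.1 : Multiset P).map (fun p : P => (p : ℕ))).prod * x.2) := by
      intro A hA
      have hAI := Finset.mem_Icc.1 (hImI hA)
      obtain ⟨f, hf, rfl⟩ := Finset.mem_image.1 hA
      have hch : ∀ i, ∃ s ∈ P.powersetCard m, ∃ q ∈ Q, (∏ p ∈ s, p) * q = f i := by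
        intro i
        have := hmemT f hf i
        obtain ⟨⟨s, q⟩, hx, h⟩ := Finset.mem_image.1 this
        obtain ⟨hs, hq⟩ := Finset.mem_product.1 hx
        exact ⟨s, hs, q, hq, h⟩
      choose s hs q hq hsq using hch
      have hmem : ∀ p ∈ ∑ i, (s i).val, p ∈ P := by
        intro p hp
        rw [Multiset.mem_sum] at hp
        obtain ⟨i, _, hi⟩ := hp
        exact (Finset.mem_powersetCard.1 (hs i)).1 hi
      have hcard : (∑ i, (s i).val).card = k * m := by
        rw [Multiset.card_sum]
        have : ∀ i ∈ (Finset.univ : Finset (Fin k)), (s i).val.card = m := fun i _ =>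
          (Finset.mem_powersetCard.1 (hs i)).2
        rw [Finset.sum_congr rfl this]
        simp
      have hprod : (∑ i, (s i).val).prod = ∏ i, ∏ p ∈ s i, p := by
        rw [Multiset.prod_sum]
        apply Finset.prod_congr rfl
        intro i _
        rw [Finset.prod_val]; rfl
      have hle : z ^ (k * m) ≤ (∑ i, (s i).val).prod := by
        rw [← hcard]
        exact Multiset.pow_card_le_prod fun p hp => (hP p (hmem p hp)).2.1
      have hAe : (∑ i, (s i).val).prod * ∏ i, q i = ∏ i, f i := by
        rw [hprod, ← Finset.prod_mul_distrib]
        exact Finset.prod_congr rfl fun i _ => hsq i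
      obtain ⟨e, he⟩ : ∃ e : Multiset P, e.map (fun p : P => (p : ℕ)) = ∑ i, (s i).val := by
        generalize (∑ i, (s i).val) = w at hmem
        lift w to Multiset P using hmem
        exact ⟨w, rfl⟩
      have hec : e.card = k * m := by
        rw [← hcard, ← he, Multiset.card_map]
      rw [Finset.mem_image]
      refine ⟨(⟨e, hec⟩, ∏ i, q i), ?_, ?_⟩
      · rw [Finset.mem_product]
        refine ⟨Finset.mem_univ _, ?_⟩
        rw [Finset.mem_Icc]
        have hqp : 0 < ∏ i, q i := Finset.prod_pos fun i _ => (hQ _ (hq i)).1.pos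
        refine ⟨hqp, ?_⟩
        rw [Nat.le_div_iff_mul_le (by positivity)]
        calc (∏ i, q i) * z ^ (k * m) ≤ (∏ i, q i) * (∑ i, (s i).val).prod :=
              Nat.mul_le_mul_left _ hle
          _ = ∏ i, f i := by rw [mul_comm, hAe]
          _ ≤ _ := hAI.2
      · show (e.map (fun p : P => (p : ℕ))).prod * ∏ i, q i = ∏ i, f i
        rw [he, hAe]
    refine (Finset.card_le_card hsub).trans (Finset.card_image_le.trans ?_)
    rw [Finset.card_product, Finset.card_univ, Sym.card_sym_eq_choose, Nat.card_Icc]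
    simp
  have h4 : Im.card * z ^ (k * m) ≤ (P.card + k * m - 1).choose (k * m) * N ^ k := by
    calc Im.card * z ^ (k * m) ≤
          (P.card + k * m - 1).choose (k * m) * (N ^ k / z ^ (k * m)) * z ^ (k * m) :=
            Nat.mul_le_mul_right _ h3
      _ ≤ _ := by
        rw [mul_assoc]
        exact Nat.mul_le_mul_left _ (Nat.div_mul_le_self _ _)
  rw [← hSc]
  calc S.card ^ (2 * k) * z ^ (k * m) = T.card ^ 2 * z ^ (k * m) := by
        rw [hTc, ← pow_mul, mul_comm 2 k]
    _ ≤ Im.card * (∑ A ∈ Finset.Icc 1 (N ^ k), (taukRalpha k N α A) ^ 2) * z ^ (k * m) :=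
        Nat.mul_le_mul_right _ h2
    _ = Im.card * z ^ (k * m) * (∑ A ∈ Finset.Icc 1 (N ^ k), (taukRalpha k N α A) ^ 2) := by ring
    _ ≤ _ := Nat.mul_le_mul_right _ h4

lemma aux_fact (m : ℕ) : (m.factorial : ℝ) ≤ (((m : ℝ) + 1) / 2) ^ m := by
  induction m with
  | zero => simp
  | succ n ih =>
    rw [Nat.factorial_succ]
    push_cast
    have h1 : (0 : ℝ) < (n : ℝ) + 1 := by positivity
    have hb := one_add_mul_le_pow (a := 1 / ((n : ℝ) + 1)) (by
      have : 0 ≤ 1 / ((n : ℝ) + 1) := by positivity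
      linarith) (n + 1)
    have h2 : (2 : ℝ) ≤ (1 + 1 / ((n : ℝ) + 1)) ^ (n + 1) := by
      refine le_trans (le_of_eq ?_) hb
      push_cast
      field_simp
      norm_num
    have h3 : (((n : ℝ) + 1 + 1) / 2) ^ (n + 1)
        = (((n : ℝ) + 1) / 2) ^ (n + 1) * (1 + 1 / ((n : ℝ) + 1)) ^ (n + 1) := by
      rw [← mul_pow]; congr 1; field_simp
    rw [h3]
    calc ((n : ℝ) + 1) * (n.factorial : ℝ) ≤ ((n : ℝ) + 1) * (((n : ℝ) + 1) / 2) ^ n := by gcongr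
      _ = (((n : ℝ) + 1) / 2) ^ (n + 1) * 2 := by ring
      _ ≤ _ := by gcongr

lemma aux_ratio (p m k : ℕ) (hm : 9 ≤ m) (hk : 2 ≤ k) (hp : 60 * (k * m) ≤ p) :
    Real.exp ((k * m : ℕ) : ℝ) * ((p + k * m - 1).choose (k * m) : ℝ) *
      ((4 * k ^ 2 : ℕ) : ℝ) ^ (2 * (k * m)) ≤
    (p.choose m : ℝ) ^ (2 * k) * ((k ^ 2 : ℕ) : ℝ) ^ (k * m) := by
  set M := k * m with hM
  have hkm : 2 * m ≤ M := Nat.mul_le_mul_right m hk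
  have hMpos : (0 : ℝ) < M := by
    have : 0 < M := by omega
    exact_mod_cast this
  have hpR : (60 : ℝ) * M ≤ p := by exact_mod_cast hp
  have hppos : (0 : ℝ) < p := by linarith
  have hmR : (9 : ℝ) ≤ m := by exact_mod_cast hm
  have hkR : (2 : ℝ) ≤ k := by exact_mod_cast hk
  have hMR : (M : ℝ) = k * m := by rw [hM]; push_cast; ring
  have hmM : 2 * (m : ℝ) ≤ M := by exact_mod_cast hkm
  -- lower bound for p.choose m
  have h1 : (1.98 * p / ((m : ℝ) + 1)) ^ m ≤ (p.choose m : ℝ) := by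
    refine le_trans ?_ (Nat.pow_le_choose (α := ℝ) m p)
    have e1 : (0.99 * (p : ℝ)) ≤ ((p + 1 - m : ℕ) : ℝ) := by
      rw [Nat.cast_sub (by omega)]
      push_cast
      linarith
    have e2 := aux_fact m
    calc (1.98 * p / ((m : ℝ) + 1)) ^ m = (0.99 * (p : ℝ)) ^ m / (((m : ℝ) + 1) / 2) ^ m := by
          rw [← div_pow]; congr 1; field_simp; norm_num
      _ ≤ _ := by
          gcongr
  have h2 : ((p + M - 1).choose M : ℝ) ≤ (1.02 * p * Real.exp 1 / M) ^ M := by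
    refine le_trans (Nat.choose_le_pow_div (α := ℝ) M (p + M - 1)) ?_
    have e1 : ((p + M - 1 : ℕ) : ℝ) ≤ 1.02 * p := by
      rw [Nat.cast_sub (by omega)]
      push_cast
      linarith
    have e2 : (M : ℝ) ^ M / (M.factorial : ℝ) ≤ Real.exp 1 ^ M := by
      have := Real.pow_div_factorial_le_exp _ hMpos.le M
      rwa [← Real.exp_one_pow M] at this
    have e3 : 1 / (M.factorial : ℝ) ≤ Real.exp 1 ^ M / (M : ℝ) ^ M := by
      rw [le_div_iff₀ (by positivity)]
      calc _ = (M : ℝ) ^ M / (M.factorial : ℝ) := by ring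
        _ ≤ _ := e2
    calc ((p + M - 1 : ℕ) : ℝ) ^ M / (M.factorial : ℝ)
        = ((p + M - 1 : ℕ) : ℝ) ^ M * (1 / (M.factorial : ℝ)) := by ring
      _ ≤ (1.02 * p) ^ M * (Real.exp 1 ^ M / (M : ℝ) ^ M) := by gcongr
      _ = _ := by rw [← div_pow, ← mul_pow]; congr 1; ring
  have h3 : Real.exp 1 * (1.02 * p * Real.exp 1 / M) * ((4 * k ^ 2 : ℕ) : ℝ) ^ 2 ≤
      (1.98 * p / ((m : ℝ) + 1)) ^ 2 * ((k ^ 2 : ℕ) : ℝ) := by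
    push_cast
    have he : Real.exp 1 ^ 2 ≤ 7.4 := by
      have h := Real.exp_one_lt_d9
      have h0 := Real.exp_pos 1
      nlinarith
    have hmm : ((m : ℝ) + 1) ^ 2 ≤ 1.25 * (m : ℝ) ^ 2 := by nlinarith
    have e1 : Real.exp 1 * (1.02 * p * Real.exp 1 / M) * (4 * (k : ℝ) ^ 2) ^ 2
        = Real.exp 1 ^ 2 * (16.32 * p * k ^ 4 / M) := by ring
    have e2 : (1.98 * p / ((m : ℝ) + 1)) ^ 2 * (k : ℝ) ^ 2
        = 3.9204 * p ^ 2 * k ^ 2 / ((m : ℝ) + 1) ^ 2 := by rw [div_pow]; ring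
    rw [e1, e2]
    calc Real.exp 1 ^ 2 * (16.32 * p * k ^ 4 / M) ≤ 7.4 * (16.32 * p * k ^ 4 / M) := by gcongr
      _ ≤ 3.9204 * p ^ 2 * k ^ 2 / (1.25 * (m : ℝ) ^ 2) := by
        rw [hMR]
        have hm0 : (0 : ℝ) < m := by linarith
        have hk0 : (0 : ℝ) < k := by linarith
        rw [← mul_div_assoc, div_le_div_iff₀ (by positivity) (by positivity)]
        rw [hMR] at hpR
        have : 7.4 * (16.32 * (p : ℝ) * k ^ 4) * (1.25 * (m : ℝ) ^ 2)
          = 150.96 * (p * k ^ 3 * m) * (k * m) := by ring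
        rw [this]
        have : 3.9204 * (p : ℝ) ^ 2 * k ^ 2 * (k * m) = 3.9204 * (p * k ^ 3 * m) * p := by ring
        rw [this]
        have h0 : (0 : ℝ) ≤ p * k ^ 3 * m := by positivity
        have := mul_le_mul_of_nonneg_left hpR h0
        have h5 : (0 : ℝ) ≤ p * k ^ 3 * m * (k * m) := by positivity
        nlinarith
      _ ≤ _ := by gcongr
  calc Real.exp (M : ℝ) * ((p + M - 1).choose M : ℝ) * ((4 * k ^ 2 : ℕ) : ℝ) ^ (2 * M)
      ≤ Real.exp 1 ^ M * (1.02 * p * Real.exp 1 / M) ^ M * ((4 * k ^ 2 : ℕ) : ℝ) ^ (2 * M) := by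
        rw [Real.exp_one_pow M]; gcongr
    _ = (Real.exp 1 * (1.02 * p * Real.exp 1 / M) * ((4 * k ^ 2 : ℕ) : ℝ) ^ 2) ^ M := by
        rw [pow_mul _ 2 M, mul_pow, mul_pow]
    _ ≤ ((1.98 * p / ((m : ℝ) + 1)) ^ 2 * ((k ^ 2 : ℕ) : ℝ)) ^ M := by
        apply pow_le_pow_left₀ (by positivity) h3
    _ = ((1.98 * p / ((m : ℝ) + 1)) ^ m) ^ (2 * k) * ((k ^ 2 : ℕ) : ℝ) ^ M := by
        rw [mul_pow]; congr 1; rw [← pow_mul, ← pow_mul]; congr 1; rw [hM]; ring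
    _ ≤ _ := by gcongr

lemma aux_P : ∃ K₀ : ℕ, ∀ k : ℕ, K₀ ≤ k →
    1.3 * (k : ℝ) ^ 2 ≤
      (((Nat.primesLE (4 * k ^ 2)).filter (fun p => k ^ 2 < p)).card : ℝ) *
        Real.log (4 * (k : ℝ) ^ 2) := by
  have hlim : ∀ᶠ x : ℝ in Filter.atTop, Real.log x ≤ 0.001 * x := by
    have := Real.isLittleO_log_id_atTop.bound (c := 0.001) (by norm_num)
    filter_upwards [this, Filter.eventually_ge_atTop 1] with x hx hx1
    have h0 := Real.log_nonneg hx1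
    simp only [id, Real.norm_eq_abs, abs_of_nonneg h0, abs_of_nonneg (zero_le_one.trans hx1)] at hx
    exact hx
  obtain ⟨B, hB⟩ := Filter.eventually_atTop.1 hlim
  refine ⟨max 2000 ⌈B⌉₊, fun k hk => ?_⟩
  have hk1 : (2000 : ℝ) ≤ k := by exact_mod_cast (le_max_left _ _).trans hk
  have hkB : B ≤ k := (Nat.le_ceil B).trans (by exact_mod_cast (le_max_right _ _).trans hk)
  have hlk := hB k hkB
  have hθ := Chebyshev.theta_ge (4 * k ^ 2)
  have hθ2 := Chebyshev.theta_le_log4_mul_x (x := ((k ^ 2 : ℕ) : ℝ)) (by positivity)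
  rw [Chebyshev.theta_eq_sum_primesLE_log] at hθ hθ2
  have hsplit : ∑ p ∈ Nat.primesLE (4 * k ^ 2), Real.log p
      ≤ ∑ p ∈ Nat.primesLE (k ^ 2), Real.log p
        + ∑ p ∈ (Nat.primesLE (4 * k ^ 2)).filter (fun p => k ^ 2 < p), Real.log p := by
    rw [← Finset.sum_filter_add_sum_filter_not (Nat.primesLE (4 * k ^ 2)) (fun p => k ^ 2 < p),
      add_comm]
    apply add_le_add_left
    apply Finset.sum_le_sum_of_subset_of_nonneg
    · intro p hp
      simp only [Finset.mem_filter, Nat.mem_primesLE, not_lt] at hp ⊢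
      exact ⟨hp.2, hp.1.2⟩
    · intro p hp _
      exact Real.log_natCast_nonneg p
  have hcard : ∑ p ∈ (Nat.primesLE (4 * k ^ 2)).filter (fun p => k ^ 2 < p), Real.log p
      ≤ (((Nat.primesLE (4 * k ^ 2)).filter (fun p => k ^ 2 < p)).card : ℝ) *
        Real.log (4 * (k : ℝ) ^ 2) := by
    rw [← nsmul_eq_mul]
    apply Finset.sum_le_card_nsmul
    intro p hp
    simp only [Finset.mem_filter, Nat.mem_primesLE] at hp
    apply Real.log_le_log
    · exact_mod_cast hp.1.2.pos
    · exact_mod_cast hp.1.1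
  have hk0 : (0 : ℝ) < k := by linarith
  have hsq : √((4 * k ^ 2 : ℕ) : ℝ) = 2 * k := by
    rw [show ((4 * k ^ 2 : ℕ) : ℝ) = (2 * (k : ℝ)) ^ 2 by push_cast; ring]
    exact Real.sqrt_sq (by positivity)
  have hl4 : Real.log 4 = 2 * Real.log 2 := by
    rw [show (4 : ℝ) = 2 ^ 2 by norm_num, Real.log_pow]; norm_num
  have hlog : Real.log ((4 * k ^ 2 : ℕ) : ℝ) = 2 * Real.log 2 + 2 * Real.log k := by
    push_cast
    rw [Real.log_mul (by norm_num) (by positivity), Real.log_pow, hl4]; norm_num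
  have hlog1 : Real.log (((4 * k ^ 2 : ℕ) : ℝ) + 1) ≤ 3 * Real.log k := by
    rw [show 3 * Real.log k = Real.log ((k : ℝ) ^ 3) by rw [Real.log_pow]; norm_num]
    apply Real.log_le_log (by positivity)
    push_cast
    nlinarith
  rw [hsq, hlog] at hθ
  rw [hl4] at hθ2
  push_cast at hθ hθ2 hlog1
  have hg := Real.log_two_gt_d9
  have hl := Real.log_two_lt_d9
  nlinarith [mul_le_mul_of_nonneg_left hlk hk0.le, sq_nonneg (k : ℝ)]

lemma aux_Q : ∃ L₀ : ℝ, ∀ N y D : ℕ, L₀ ≤ Real.log N → (y : ℝ) ≤ 4 * Real.log N ^ 2 →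
    1 ≤ D → (D : ℝ) ≤ Real.exp (Real.log N / 2) →
    (N : ℝ) ≤ Real.log N ^ 2 * D *
      (((Nat.primesLE (N / D)).filter (fun q => y < q)).card : ℝ) := by
  have hexp : ∀ᶠ x : ℝ in Filter.atTop, 64 * x ^ 3 ≤ Real.exp (x / 2) := by
    have h := (Real.tendsto_exp_div_pow_atTop 3).eventually_ge_atTop 512
    have h2 : Filter.Tendsto (fun x : ℝ => x / 2) Filter.atTop Filter.atTop :=
      Filter.tendsto_id.atTop_div_const (by norm_num)
    filter_upwards [h2.eventually h, Filter.eventually_gt_atTop 0] with x hx hx0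
    rw [le_div_iff₀ (by positivity)] at hx
    nlinarith
  obtain ⟨B, hB⟩ := Filter.eventually_atTop.1 hexp
  refine ⟨max B 100, fun N y D hL hy hD1 hD => ?_⟩
  set L := Real.log N with hLdef
  have hLB : B ≤ L := (le_max_left _ _).trans hL
  have hL100 : 100 ≤ L := (le_max_right _ _).trans hL
  have hE := hB L hLB
  have hN0 : (0 : ℝ) < N := by
    rcases Nat.eq_zero_or_pos N with h | h
    · rw [h] at hLdef; simp at hLdef; linarith
    · exact_mod_cast h
  have hD0 : (0 : ℝ) < D := by exact_mod_cast hD1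
  set X := N / D with hX
  set F : ℝ := (N : ℝ) / D with hF
  have hNe : (N : ℝ) = Real.exp (L / 2) * Real.exp (L / 2) := by
    rw [← Real.exp_add, add_halves, hLdef, Real.exp_log hN0]
  have hFE : Real.exp (L / 2) ≤ F := by
    rw [hF, le_div_iff₀ hD0, hNe]
    gcongr
  have hXF : F - 1 ≤ X := by
    have := Nat.lt_div_mul_add (a := N) (b := D) (by omega)
    have h2 : (N : ℝ) < X * D + D := by exact_mod_cast this
    have : F < X + 1 := by
      rw [hF, div_lt_iff₀ hD0]; linarith
    linarith
  have hF3 : 64 * L ^ 3 ≤ F := hE.trans hFE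
  have hL3 : 10000 * L ≤ L ^ 3 := by nlinarith [mul_self_nonneg L]
  have hXbig : (1000 : ℝ) ≤ X := by linarith
  have hXN : (X : ℝ) ≤ N := by exact_mod_cast Nat.div_le_self N D
  have hX0 : (0 : ℝ) < X := by linarith
  have hlogX : Real.log X ≤ L := Real.log_le_log hX0 hXN
  have hlogX0 : 0 < Real.log X := Real.log_pos (by linarith)
  have hpi := Chebyshev.pi_ge X
  have hlog1 : Real.log ((X : ℝ) + 1) ≤ 0.1 * X := by
    have h := Real.log_le_sub_one_of_pos (x := ((X : ℝ) + 1) / 64) (by positivity)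
    rw [Real.log_div (by positivity) (by norm_num),
      show (64 : ℝ) = 2 ^ 6 by norm_num, Real.log_pow] at h
    have hl := Real.log_two_lt_d9
    push_cast at h
    linarith
  have hpi2 : (X : ℝ) / (2 * L) ≤ (Nat.primeCounting X : ℝ) := by
    refine le_trans ?_ hpi
    have hg := Real.log_two_gt_d9
    calc (X : ℝ) / (2 * L) = (X / 2) / L := by field_simp
      _ ≤ (X / 2) / Real.log X := by gcongr
      _ ≤ _ := by
        gcongr
        nlinarith
  have hcard : (Nat.primeCounting X : ℝ) ≤
      (((Nat.primesLE X).filter (fun q => y < q)).card : ℝ) + (y + 1) := by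
    rw [← Nat.primesLE_card_eq_primeCounting,
      ← Finset.card_filter_add_card_filter_not (s := Nat.primesLE X) (fun q => y < q)]
    push_cast
    gcongr
    have : ((Nat.primesLE X).filter (fun q => ¬ y < q)).card ≤ (Finset.range (y + 1)).card := by
      apply Finset.card_le_card
      intro q hq
      simp only [Finset.mem_filter, Finset.mem_range, not_lt] at hq ⊢
      omega
    rw [Finset.card_range] at this
    exact_mod_cast this
  have hL0 : 0 < L := by linarith
  have hfin : F ≤ L ^ 2 * (((Nat.primesLE X).filter (fun q => y < q)).card : ℝ) := by
    have h1 : (F / 4) / L ≤ X / (2 * L) := by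
      rw [div_le_div_iff₀ hL0 (by positivity)]
      nlinarith
    have h2 : (F / 4) / L - 4 * L ^ 2 - 1 ≤
      (((Nat.primesLE X).filter (fun q => y < q)).card : ℝ) := by linarith
    have h3 : L ^ 2 * ((F / 4) / L - 4 * L ^ 2 - 1) = L * F / 4 - 4 * L ^ 4 - L ^ 2 := by
      field_simp
    have h4 := mul_le_mul_of_nonneg_left h2 (sq_nonneg L)
    rw [h3] at h4
    refine le_trans ?_ h4
    have h5 : 64 * L ^ 4 ≤ L * F := by nlinarith
    have h6 : L ^ 2 ≤ L ^ 4 := by nlinarith [mul_self_nonneg L]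
    have h7 : 100 * F ≤ L * F := by
      have : 0 ≤ F := by positivity
      gcongr
    nlinarith
  calc (N : ℝ) = D * F := by rw [hF]; field_simp
    _ ≤ D * (L ^ 2 * (((Nat.primesLE X).filter (fun q => y < q)).card : ℝ)) := by gcongr
    _ = _ := by ring

set_option maxHeartbeats 1000000 in
theorem lower_bound_sum_taukRalpha_sq (α : ℝ) (hα0 : 0 < α) (hα1 : α < 1) :
    ∃ N₀ : ℕ, ∃ c : ℝ, 0 < c ∧
      ∀ N : ℕ, N₀ ≤ N → ∀ k : ℕ,
        Real.log (Real.log N) ^ (3 : ℕ) ≤ (k : ℝ) → (k : ℝ) ≤ Real.log N ^ α →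
        c * (N : ℝ) ^ k * Real.exp ((k : ℝ) ^ 2 / (200 * Real.log (Real.log N))) ≤
          ∑ A ∈ Finset.Icc 1 (N ^ k), (taukRalpha k N α A : ℝ) ^ 2 := by
  obtain ⟨K₀, hK₀⟩ := aux_P
  obtain ⟨L₀, hL₀⟩ := aux_Q
  have hlogN : Filter.Tendsto (fun N : ℕ => Real.log (N : ℝ)) Filter.atTop Filter.atTop :=
    Real.tendsto_log_atTop.comp tendsto_natCast_atTop_atTop
  have hloglogN : Filter.Tendsto (fun N : ℕ => Real.log (Real.log (N : ℝ)))
      Filter.atTop Filter.atTop := Real.tendsto_log_atTop.comp hlogN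
  obtain ⟨N₀, hN₀⟩ := Filter.eventually_atTop.1
    ((hlogN.eventually_ge_atTop (max L₀ 2)).and
      (hloglogN.eventually_ge_atTop (max (K₀ : ℝ) 2000)))
  refine ⟨N₀, 1, one_pos, fun N hN k hk1 hk2 => ?_⟩
  obtain ⟨hA, hB⟩ := hN₀ N hN
  set L := Real.log (N : ℝ) with hL
  set l := Real.log L with hl
  have hLL₀ : L₀ ≤ L := (le_max_left _ _).trans hA
  have hL2 : 2 ≤ L := (le_max_right _ _).trans hA
  have hlK : (K₀ : ℝ) ≤ l := (le_max_left _ _).trans hB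
  have hl2 : 2000 ≤ l := (le_max_right _ _).trans hB
  have hl0 : 0 < l := by linarith
  have hL0 : 0 < L := by linarith
  have hl3 : l ≤ l ^ 3 := by nlinarith [mul_self_nonneg l]
  have hkl : l ≤ k := hl3.trans hk1
  have hkR : (2000 : ℝ) ≤ k := hl2.trans hkl
  have hk0 : (0 : ℝ) < k := by linarith
  have hkK : K₀ ≤ k := by exact_mod_cast hlK.trans hkl
  have hkL : (k : ℝ) ≤ L := by
    refine hk2.trans ?_
    calc L ^ α ≤ L ^ (1 : ℝ) := Real.rpow_le_rpow_of_exponent_le (by linarith) hα1.le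
      _ = L := Real.rpow_one L
  have hlogk : Real.log k ≤ l := Real.log_le_log hk0 hkL
  have hN0 : (0 : ℝ) < N := by
    rcases Nat.eq_zero_or_pos N with h | h
    · rw [h] at hL; simp at hL; linarith
    · exact_mod_cast h
  have hlog4 : Real.log (4 * (k : ℝ) ^ 2) ≤ 2.1 * l := by
    rw [Real.log_mul (by norm_num) (by positivity), Real.log_pow,
      show (4 : ℝ) = 2 ^ 2 by norm_num, Real.log_pow]
    have := Real.log_two_lt_d9
    push_cast
    linarith
  -- the parameter m
  set m := ⌊(k : ℝ) / (100 * l)⌋₊ with hm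
  have hm1 : (m : ℝ) ≤ k / (100 * l) := Nat.floor_le (by positivity)
  have hm2 : (k : ℝ) / (100 * l) < m + 1 := Nat.lt_floor_add_one _
  have hm1' : 100 * l * m ≤ k := by
    rw [le_div_iff₀ (by positivity)] at hm1; linarith
  have hkl2 : l ^ 2 ≤ k / l := by
    rw [le_div_iff₀ hl0]; nlinarith
  have hkd : (k : ℝ) / (100 * l) = (k / l) / 100 := by field_simp
  have hm9 : 9 ≤ m := by
    have : (9 : ℝ) < m := by
      have h4 : 2000 * l ≤ l ^ 2 := by rw [sq]; exact mul_le_mul_of_nonneg_right hl2 hl0.le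
      rw [hkd] at hm2
      linarith
    exact_mod_cast this.le
  have hm9R : (9 : ℝ) ≤ m := by exact_mod_cast hm9
  set P := (Nat.primesLE (4 * k ^ 2)).filter (fun p => k ^ 2 < p) with hP
  set Q := (Nat.primesLE (N / (4 * k ^ 2) ^ m)).filter (fun q => 4 * k ^ 2 < q) with hQ
  have hPc : 60 * (k * m) ≤ P.card := by
    have h1 := hK₀ k hkK
    have h2 : 1.3 * (k : ℝ) ^ 2 ≤ P.card * (2.1 * l) := h1.trans (by gcongr)
    have h3 : 100 * l * m * k ≤ k * k := by gcongr
    have h4 : l * (60 * (k * m)) ≤ l * (P.card : ℝ) := by nlinarith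
    have h5 := le_of_mul_le_mul_left h4 hl0
    exact_mod_cast h5
  have hmL : (m : ℝ) + 1 ≤ L ^ α := by
    refine le_trans ?_ hk2
    nlinarith
  have hk0' : 0 < k := by exact_mod_cast hk0
  have hD : (((4 * k ^ 2) ^ m : ℕ) : ℝ) ≤ Real.exp (L / 2) := by
    rw [← Real.exp_log (show (0 : ℝ) < (((4 * k ^ 2) ^ m : ℕ) : ℝ) by positivity)]
    apply Real.exp_le_exp.2
    push_cast
    rw [Real.log_pow]
    calc (m : ℝ) * Real.log (4 * (k : ℝ) ^ 2) ≤ m * (2.1 * l) := by gcongr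
      _ ≤ L / 2 := by nlinarith
  have hy : ((4 * k ^ 2 : ℕ) : ℝ) ≤ 4 * L ^ 2 := by
    push_cast; gcongr
  have hQc := hL₀ N (4 * k ^ 2) ((4 * k ^ 2) ^ m) hLL₀ hy (Nat.one_le_pow _ _ (by positivity)) hD
  have hcomb := aux_comb P Q (k ^ 2) (4 * k ^ 2) m (N / (4 * k ^ 2) ^ m) N k α (by positivity)
    (by
      intro p hp
      simp only [hP, Finset.mem_filter, Nat.mem_primesLE] at hp
      exact ⟨hp.1.2, hp.2.le, hp.1.1⟩)
    (by
      intro q hq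
      simp only [hQ, Finset.mem_filter, Nat.mem_primesLE] at hq
      exact ⟨hq.1.2, hq.2, hq.1.1⟩)
    (Nat.mul_div_le _ _) hmL
  have hratio := aux_ratio P.card m k hm9 (by exact_mod_cast (by linarith : (2 : ℝ) ≤ k)) hPc
  set M := k * m with hM
  set C : ℝ := ((P.card + M - 1).choose M : ℝ) with hC
  set E : ℝ := ∑ A ∈ Finset.Icc 1 (N ^ k), (taukRalpha k N α A : ℝ) ^ 2 with hE
  have hcombR : ((P.card.choose m : ℝ) * (Q.card : ℝ)) ^ (2 * k) * ((k ^ 2 : ℕ) : ℝ) ^ M ≤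
      C * (N : ℝ) ^ k * E := by
    rw [hC, hE]
    exact_mod_cast hcomb
  have hC0 : 0 < C := by
    rw [hC]
    have : 0 < (P.card + M - 1).choose M := by
      apply Nat.choose_pos
      have : 0 < M := Nat.mul_pos hk0' (by omega)
      omega
    exact_mod_cast this
  set Y : ℝ := ((4 * k ^ 2 : ℕ) : ℝ) with hY
  have hY0 : 0 < Y := by rw [hY]; positivity
  have hQ2 : (N : ℝ) ^ (2 * k) ≤ L ^ (4 * k) * Y ^ (2 * M) * (Q.card : ℝ) ^ (2 * k) := by
    have h1 : (N : ℝ) ^ (2 * k) ≤ (L ^ 2 * Y ^ m * (Q.card : ℝ)) ^ (2 * k) := by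
      apply pow_le_pow_left₀ hN0.le
      refine hQc.trans (le_of_eq ?_)
      rw [hY]; push_cast; ring
    refine h1.trans (le_of_eq ?_)
    rw [mul_pow, mul_pow, ← pow_mul, ← pow_mul]
    congr 3
    · ring
    · rw [hM]; ring
  -- combine
  have hmain : Real.exp (M : ℝ) * (N : ℝ) ^ k ≤ L ^ (4 * k) * E := by
    have hpos : 0 < C * Y ^ (2 * M) * (N : ℝ) ^ k := by positivity
    refine le_of_mul_le_mul_left ?_ hpos
    calc C * Y ^ (2 * M) * (N : ℝ) ^ k * (Real.exp (M : ℝ) * (N : ℝ) ^ k)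
        = (Real.exp (M : ℝ) * C * Y ^ (2 * M)) * (N : ℝ) ^ (2 * k) := by ring
      _ ≤ ((P.card.choose m : ℝ) ^ (2 * k) * ((k ^ 2 : ℕ) : ℝ) ^ M) *
          (L ^ (4 * k) * Y ^ (2 * M) * (Q.card : ℝ) ^ (2 * k)) := by gcongr
      _ = L ^ (4 * k) * Y ^ (2 * M) *
          (((P.card.choose m : ℝ) * (Q.card : ℝ)) ^ (2 * k) * ((k ^ 2 : ℕ) : ℝ) ^ M) := by
          rw [mul_pow]; ring
      _ ≤ L ^ (4 * k) * Y ^ (2 * M) * (C * (N : ℝ) ^ k * E) := by gcongr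
      _ = _ := by ring
  have hLexp : L ^ (4 * k) = Real.exp (4 * k * l) := by
    rw [← Real.exp_log (show 0 < L ^ (4 * k) by positivity), Real.log_pow]
    push_cast
    rfl
  have hexpo : (k : ℝ) ^ 2 / (200 * l) + 4 * k * l ≤ (M : ℝ) := by
    have h1 : (M : ℝ) = k * m := by rw [hM]; push_cast; ring
    have h2 : (k : ℝ) ^ 2 / (200 * l) = k * ((k / l) / 200) := by field_simp
    rw [h1, h2]
    have h3 : (k / l) / 200 + 4 * l ≤ (m : ℝ) := by
      have h4 : 2000 * l ≤ l ^ 2 := by rw [sq]; exact mul_le_mul_of_nonneg_right hl2 hl0.le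
      rw [hkd] at hm2
      linarith
    have h5 := mul_le_mul_of_nonneg_left h3 hk0.le
    linarith
  have hLpos : 0 < L ^ (4 * k) := by positivity
  refine le_of_mul_le_mul_left ?_ hLpos
  calc L ^ (4 * k) * (1 * (N : ℝ) ^ k * Real.exp ((k : ℝ) ^ 2 / (200 * l)))
      = Real.exp ((k : ℝ) ^ 2 / (200 * l) + 4 * k * l) * (N : ℝ) ^ k := by
        rw [hLexp, Real.exp_add]; ring
    _ ≤ Real.exp (M : ℝ) * (N : ℝ) ^ k := by gcongr
    _ ≤ _ := hmain
end
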